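/- arXiv:0911.0233 — 8 statements merged into one kernel-verified Lean document; each statement's English description precedes it below -/
import Mathlib

section
/- There is an absolute constant c > 0 such that for every integer J ≥ 1, all real numbers α_1, …, α_J (not necessarily distinct), and every real T > 0, one has ∫_{-T}^{T} |∑_{j=1}^{J} e^{i α_j x}|^2 dx ≥ c · T · J. -/
open MeasureTheory

lemma salem_norm_sq {J : ℕ} (α : Fin J → ℝ) (x : ℝ) :
    ‖∑ j, Complex.exp (Complex.I * (α j : ℂ) * (x : ℂ))‖ ^ 2
      = ∑ j, ∑ k, Real.cos ((α j - α k) * x) := by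
  have h : ∀ j, Complex.exp (Complex.I * (α j : ℂ) * (x : ℂ))
      = (Real.cos (α j * x) : ℂ) + (Real.sin (α j * x) : ℂ) * Complex.I := by
    intro j
    rw [show Complex.I * (α j : ℂ) * (x : ℂ) = ((α j * x : ℝ) : ℂ) * Complex.I by
      push_cast; ring, Complex.exp_mul_I]
    push_cast
    rfl
  simp_rw [h]
  rw [Finset.sum_add_distrib, ← Finset.sum_mul, ← Complex.ofReal_sum, ← Complex.ofReal_sum,
    ← Complex.normSq_eq_norm_sq, Complex.normSq_add_mul_I, sq, sq, Finset.sum_mul_sum,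
    Finset.sum_mul_sum, ← Finset.sum_add_distrib]
  refine Finset.sum_congr rfl fun j _ => ?_
  rw [← Finset.sum_add_distrib]
  refine Finset.sum_congr rfl fun k _ => ?_
  rw [sub_mul, Real.cos_sub]

lemma salem_inner (b : ℝ) (hb : b ≠ 0) (t : ℝ) :
    ∫ x in (-t)..t, Real.cos (b * x) = 2 / b * Real.sin (b * t) := by
  rw [intervalIntegral.integral_comp_mul_left (fun x => Real.cos x) hb, integral_cos]
  simp
  ring

lemma salem_zero (T : ℝ) :
    ∫ t in (0:ℝ)..T, ∫ x in (-t)..t, Real.cos (0 * x) = T ^ 2 := by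
  have : ∀ t : ℝ, (∫ x in (-t)..t, Real.cos (0 * x)) = 2 * t := by
    intro t
    simp
    ring
  simp_rw [this]
  rw [intervalIntegral.integral_const_mul, integral_id]
  ring

lemma salem_nonneg (b T : ℝ) :
    0 ≤ ∫ t in (0:ℝ)..T, ∫ x in (-t)..t, Real.cos (b * x) := by
  rcases eq_or_ne b 0 with rfl | hb
  · rw [salem_zero]; positivity
  · simp_rw [salem_inner b hb]
    rw [intervalIntegral.integral_const_mul,
      intervalIntegral.integral_comp_mul_left (fun x => Real.sin x) hb, integral_sin]
    have h1 := Real.cos_le_one (b * T)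
    have : 2 / b * (b⁻¹ • (Real.cos (b * 0) - Real.cos (b * T)))
        = 2 / b ^ 2 * (1 - Real.cos (b * T)) := by
      simp
      field_simp
    rw [this]
    exact mul_nonneg (by positivity) (by linarith)

lemma salem_cont (b : ℝ) : Continuous fun t : ℝ => ∫ x in (-t)..t, Real.cos (b * x) := by
  rcases eq_or_ne b 0 with rfl | hb
  · simp
    fun_prop
  · simp_rw [salem_inner b hb]
    fun_prop

/-- Salem's trick: `∫_{-T}^{T} |∑_j e^{iα_j x}|² dx ≥ c·T·J`. -/
theorem salem_lower_bound :
    ∃ c > (0:ℝ), ∀ J : ℕ, 1 ≤ J → ∀ α : Fin J → ℝ, ∀ T : ℝ, 0 < T →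
      c * T * J ≤
        ∫ x in (-T)..T, ‖∑ j, Complex.exp (Complex.I * (α j : ℂ) * (x : ℂ))‖ ^ 2 := by
  refine ⟨1, one_pos, fun J _ α T hT => ?_⟩
  set F : ℝ → ℝ := fun x => ‖∑ j, Complex.exp (Complex.I * (α j : ℂ) * (x : ℂ))‖ ^ 2 with hF
  have hFc : Continuous F := by fun_prop
  have hF0 : ∀ x, 0 ≤ F x := fun x => by positivity
  have hin : ∀ t, ∫ x in (-t)..t, F x
      = ∑ j, ∑ k, ∫ x in (-t)..t, Real.cos ((α j - α k) * x) := by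
    intro t
    simp_rw [hF, salem_norm_sq]
    rw [intervalIntegral.integral_finsetSum]
    · refine Finset.sum_congr rfl fun j _ => ?_
      rw [intervalIntegral.integral_finsetSum]
      intro k _
      exact Continuous.intervalIntegrable (by fun_prop) _ _
    · intro j _
      exact Continuous.intervalIntegrable (by fun_prop) _ _
  have hGc : Continuous fun t : ℝ => ∫ x in (-t)..t, F x := by
    simp_rw [hin]
    exact continuous_finsetSum _ fun j _ => continuous_finsetSum _ fun k _ => salem_cont _
  have hlow : (J : ℝ) * T ^ 2 ≤ ∫ t in (0:ℝ)..T, ∫ x in (-t)..t, F x := by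
    simp_rw [hin]
    rw [intervalIntegral.integral_finsetSum]
    · have : (J : ℝ) * T ^ 2 = ∑ j : Fin J, T ^ 2 := by simp
      rw [this]
      refine Finset.sum_le_sum fun j _ => ?_
      rw [intervalIntegral.integral_finsetSum]
      · have h := Finset.single_le_sum (s := Finset.univ)
          (f := fun k => ∫ t in (0:ℝ)..T, ∫ x in (-t)..t, Real.cos ((α j - α k) * x))
          (fun k _ => salem_nonneg _ T) (Finset.mem_univ j)
        simp only [sub_self] at h
        rw [salem_zero] at h
        exact h
      · intro k _
        exact (salem_cont _).intervalIntegrable _ _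
    · intro j _
      exact (continuous_finsetSum _ fun k _ => salem_cont _).intervalIntegrable _ _
  have hup : (∫ t in (0:ℝ)..T, ∫ x in (-t)..t, F x) ≤ ∫ t in (0:ℝ)..T, ∫ x in (-T)..T, F x := by
    refine intervalIntegral.integral_mono_on hT.le (hGc.intervalIntegrable _ _)
      (by simp) fun t ht => ?_
    exact intervalIntegral.integral_mono_interval (by linarith [ht.2]) (by linarith [ht.1]) ht.2
      (Filter.Eventually.of_forall hF0) (hFc.intervalIntegrable _ _)
  rw [intervalIntegral.integral_const, smul_eq_mul, sub_zero] at hup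
  have : T * (T * J) ≤ T * ∫ x in (-T)..T, F x := by linarith
  rw [one_mul]
  exact le_of_mul_le_mul_left this hT
end

section
/- There exists a constant H > 0 such that for every t ∈ [0,1] and every x ∈ ℝ there exists z ∈ ℂ with |z − x| ≤ H and |φ̃_t(z)| ≥ 1/2. -/
/-- `φ̃_t(z) = 1 + e^{-itz} + e^{-iz}`. -/
noncomputable def phiTilde (t : ℝ) (z : ℂ) : ℂ :=
  1 + Complex.exp (-Complex.I * (t : ℂ) * z) + Complex.exp (-Complex.I * z)

/-- There is `H > 0` such that near any real point there is `z` with `|φ̃_t(z)| ≥ 1/2`. -/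
theorem phiTilde_not_small_nearby :
    ∃ H > (0:ℝ), ∀ t ∈ Set.Icc (0:ℝ) 1, ∀ x : ℝ,
      ∃ z : ℂ, ‖z - (x : ℂ)‖ ≤ H ∧ 1 / 2 ≤ ‖phiTilde t z‖ := by
  have hpi := Real.pi_pos
  refine ⟨2 * Real.pi, by positivity, ?_⟩
  intro t _ x
  set k : ℤ := ⌊x / (2 * Real.pi)⌋ with hk
  have h1 : (k : ℝ) * (2 * Real.pi) ≤ x :=
    (le_div_iff₀ (by positivity)).1 (Int.floor_le _)
  have h2 : x < ((k : ℝ) + 1) * (2 * Real.pi) :=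
    (div_lt_iff₀ (by positivity)).1 (Int.lt_floor_add_one _)
  refine ⟨(((k : ℝ) * (2 * Real.pi) : ℝ) : ℂ), ?_, ?_⟩
  · rw [← Complex.ofReal_sub, Complex.norm_real, Real.norm_eq_abs, abs_le]
    constructor <;> nlinarith
  · have e1 : Complex.exp (-Complex.I * (((k : ℝ) * (2 * Real.pi) : ℝ) : ℂ)) = 1 := by
      rw [Complex.exp_eq_one_iff]
      refine ⟨-k, ?_⟩
      push_cast
      ring
    have e2 : ‖Complex.exp (-Complex.I * (t : ℂ) * (((k : ℝ) * (2 * Real.pi) : ℝ) : ℂ))‖ = 1 := by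
      have := Complex.norm_exp_ofReal_mul_I (-(t * ((k : ℝ) * (2 * Real.pi))))
      rw [← this]
      congr 2
      push_cast
      ring
    unfold phiTilde
    rw [e1]
    generalize Complex.exp (-Complex.I * (t : ℂ) * (((k : ℝ) * (2 * Real.pi) : ℝ) : ℂ)) = w at e2
    have h3 : ‖(2 : ℂ)‖ ≤ ‖1 + w + 1‖ + ‖w‖ := by
      have := norm_sub_le (1 + w + 1) w
      rwa [show (1 + w + 1) - w = (2 : ℂ) by ring] at this
    rw [e2, Complex.norm_ofNat] at h3
    linarith
end

section
/- There exist absolute constants M ∈ ℕ (M ≥ 1) and C > 0 such that for every t ∈ [0,1] and every x ∈ ℝ the following two statements hold: (i) every finite set of pairwise distinct zeros of φ̃_t contained in the open ball B(x,1) ⊆ ℂ has cardinality at most M; (ii) for every ε ∈ (0, 1/3) and every z ∈ B(x,1) with |φ̃_t(z)| ≤ ε, there exists λ ∈ ℂ with φ̃_t(λ) = 0 and |z − λ| ≤ C · ε^{1/M}. -/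
open Metric Filter Topology in
/-- Quantitative existence of a zero from a lower bound on a circle. -/
lemma exists_zero_of_sphere {G : ℂ → ℂ} (hG : Differentiable ℂ G) {z0 : ℂ} {ρ δ : ℝ}
    (hρ : 0 < ρ) (hs : ∀ z ∈ sphere z0 ρ, δ ≤ ‖G z - G z0‖) (hδ : ‖G z0‖ < δ / 2) :
    ∃ w, ‖w - z0‖ ≤ ρ ∧ G w = 0 := by
  have hδ0 : 0 < δ := by have := norm_nonneg (G z0); linarith
  have hfr : ∃ᶠ z in 𝓝 z0, G z ≠ G z0 := by
    intro hcon
    have hev : G =ᶠ[𝓝 z0] fun _ => G z0 := by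
      filter_upwards [hcon] with z hz
      simpa using hz
    have h1 : AnalyticOnNhd ℂ G Set.univ := fun z _ => hG.analyticAt z
    have h2 : G = fun _ => G z0 := h1.eq_of_eventuallyEq analyticOnNhd_const hev
    have h3 := hs (z0 + ρ) (by simp [abs_of_pos hρ])
    rw [congrFun h2 (z0 + ρ)] at h3
    simp at h3
    linarith
  have := hG.diffContOnCl.ball_subset_image_closedBall hρ hs hfr
  have h0 : (0 : ℂ) ∈ ball (G z0) (δ / 2) := by simpa using hδ
  obtain ⟨w, hw, hw0⟩ := this h0
  exact ⟨w, by simpa [dist_eq_norm] using hw, hw0⟩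

/-- The normalized exponential sum. -/
noncomputable def expSum (t : ℝ) (a b w : ℂ) : ℂ :=
  1 + a * Complex.exp (-Complex.I * (t : ℂ) * w) + b * Complex.exp (-Complex.I * w)

lemma expSum_zero (t : ℝ) (a b : ℂ) : expSum t a b 0 = 1 + a + b := by simp [expSum]

lemma hasDerivAt_threeTerm (t : ℝ) (c a b w : ℂ) :
    HasDerivAt (fun w => c + a * Complex.exp (-Complex.I * (t : ℂ) * w)
      + b * Complex.exp (-Complex.I * w))
      (0 + (-Complex.I * t * a) * Complex.exp (-Complex.I * (t : ℂ) * w)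
      + (-Complex.I * b) * Complex.exp (-Complex.I * w)) w := by
  have h1 : HasDerivAt (fun w : ℂ => -Complex.I * (t : ℂ) * w) (-Complex.I * t) w := by
    simpa using (hasDerivAt_id w).const_mul (-Complex.I * (t : ℂ))
  have h2 : HasDerivAt (fun w : ℂ => -Complex.I * w) (-Complex.I) w := by
    simpa using (hasDerivAt_id w).const_mul (-Complex.I)
  have := ((h1.cexp.const_mul a).const_add c).add (h2.cexp.const_mul b)
  refine this.congr_deriv ?_
  ring

lemma differentiable_expSum (t : ℝ) (a b : ℂ) : Differentiable ℂ (expSum t a b) :=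
  fun w => (hasDerivAt_threeTerm t 1 a b w).differentiableAt

lemma threeTerm_eq_zero {t : ℝ} {c a b : ℂ}
    (h : ∀ w : ℂ, c + a * Complex.exp (-Complex.I * (t : ℂ) * w)
      + b * Complex.exp (-Complex.I * w) = 0) :
    c + a + b = 0 ∧ t * a + b = 0 ∧ t ^ 2 * a + b = 0 := by
  have h1 : ∀ w : ℂ, 0 + (-Complex.I * t * a) * Complex.exp (-Complex.I * (t : ℂ) * w)
      + (-Complex.I * b) * Complex.exp (-Complex.I * w) = 0 := by
    intro w
    have := hasDerivAt_threeTerm t c a b w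
    rw [funext h] at this
    exact this.unique (hasDerivAt_const w 0)
  have h2 : ∀ w : ℂ, 0 + (-Complex.I * t * (-Complex.I * t * a)) *
      Complex.exp (-Complex.I * (t : ℂ) * w)
      + (-Complex.I * (-Complex.I * b)) * Complex.exp (-Complex.I * w) = 0 := by
    intro w
    have := hasDerivAt_threeTerm t 0 (-Complex.I * t * a) (-Complex.I * b) w
    rw [funext h1] at this
    exact this.unique (hasDerivAt_const w 0)
  refine ⟨by simpa using h 0, ?_, ?_⟩
  · have := h1 0
    simp only [mul_zero, Complex.exp_zero, mul_one] at this
    linear_combination Complex.I * this + (t * a + b) * Complex.I_mul_I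
  · have := h2 0
    simp only [mul_zero, Complex.exp_zero, mul_one] at this
    linear_combination -this + (t ^ 2 * a + b) * Complex.I_mul_I

lemma nondegenerate {t : ℝ} (ht : t ∈ Set.Icc (0 : ℝ) 1) {a b : ℂ} (ha : 9 / 25 ≤ ‖a‖)
    (ha' : ‖a‖ ≤ 3) (hb : 9 / 25 ≤ ‖b‖) (hab : ‖1 + a + b‖ ≤ 1 / 3) :
    1 / 200 ≤ ‖t * a + b‖ ∨ 1 / 200 ≤ ‖(t : ℂ) ^ 2 * a + b‖ := by
  by_contra! hcon
  obtain ⟨h1, h2⟩ := hcon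
  obtain ⟨ht0, ht1⟩ := ht
  have h3 : ‖((t * (1 - t) : ℝ) : ℂ) * a‖ ≤ ‖t * a + b‖ + ‖(t : ℂ) ^ 2 * a + b‖ := by
    have : ((t * (1 - t) : ℝ) : ℂ) * a = (t * a + b) - ((t : ℂ) ^ 2 * a + b) := by
      push_cast; ring
    rw [this]; exact norm_sub_le _ _
  have hn : 0 ≤ t * (1 - t) := mul_nonneg ht0 (by linarith)
  rw [norm_mul, Complex.norm_real, Real.norm_of_nonneg hn] at h3
  have h4 : t * (1 - t) < 1 / 36 := by nlinarith
  rcases le_total t (1 / 2) with h | h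
  · have h5 : t < 1 / 18 := by nlinarith
    have h6 : ‖b‖ ≤ ‖t * a + b‖ + ‖(t : ℂ) * a‖ := by
      have : b = (t * a + b) - (t : ℂ) * a := by ring
      nth_rewrite 1 [this]; exact norm_sub_le _ _
    rw [norm_mul, Complex.norm_real, Real.norm_of_nonneg ht0] at h6
    nlinarith [norm_nonneg a]
  · have h5 : 1 - t < 1 / 18 := by nlinarith
    have h6 : (1 : ℝ) ≤ ‖1 + a + b‖ + (‖t * a + b‖ + ‖((1 - t : ℝ) : ℂ) * a‖) := by
      have : (1 : ℂ) = (1 + a + b) - ((t * a + b) + ((1 - t : ℝ) : ℂ) * a) := by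
        push_cast; ring
      calc (1 : ℝ) = ‖(1 : ℂ)‖ := by simp
        _ = ‖(1 + a + b) - ((t * a + b) + ((1 - t : ℝ) : ℂ) * a)‖ := by rw [← this]
        _ ≤ _ := (norm_sub_le _ _).trans (by gcongr; exact norm_add_le _ _)
    rw [norm_mul, Complex.norm_real, Real.norm_of_nonneg (by linarith : 0 ≤ 1 - t)] at h6
    nlinarith [norm_nonneg a]

lemma exp_taylor {x : ℂ} (hx : ‖x‖ ≤ 1) :
    ‖Complex.exp x - (1 + x + x ^ 2 / 2)‖ ≤ ‖x‖ ^ 3 * (1 / 3) := by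
  have := Complex.exp_bound hx (n := 3) (by norm_num)
  simp only [Finset.sum_range_succ, Finset.sum_range_zero] at this
  norm_num [Nat.factorial] at this
  have h3 : 0 ≤ ‖x‖ ^ 3 := by positivity
  linarith

lemma expSum_taylor {t : ℝ} (ht : t ∈ Set.Icc (0 : ℝ) 1) {a b : ℂ}
    (ha' : ‖a‖ ≤ 3) (hb' : ‖b‖ ≤ 3) {h : ℂ} (hh : ‖h‖ ≤ 1) :
    ‖expSum t a b h - expSum t a b 0 + (Complex.I * (t * a + b) * h +
      (t ^ 2 * a + b) * h ^ 2 / 2)‖ ≤ 2 * ‖h‖ ^ 3 := by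
  obtain ⟨ht0, ht1⟩ := ht
  have e1 : ‖-Complex.I * (t : ℂ) * h‖ ≤ ‖h‖ := by
    simp only [norm_mul, norm_neg, Complex.norm_I, Complex.norm_real, Real.norm_of_nonneg ht0]
    nlinarith [norm_nonneg h]
  have e2 : ‖-Complex.I * h‖ ≤ ‖h‖ := by simp
  have t1 := exp_taylor (e1.trans hh)
  have t2 := exp_taylor (e2.trans hh)
  have key : expSum t a b h - expSum t a b 0 + (Complex.I * (t * a + b) * h +
      (t ^ 2 * a + b) * h ^ 2 / 2) =
      a * (Complex.exp (-Complex.I * (t : ℂ) * h) - (1 + (-Complex.I * (t : ℂ) * h)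
        + (-Complex.I * (t : ℂ) * h) ^ 2 / 2)) +
      b * (Complex.exp (-Complex.I * h) - (1 + (-Complex.I * h)
        + (-Complex.I * h) ^ 2 / 2)) := by
    rw [expSum_zero, expSum]
    linear_combination (t ^ 2 * a + b) * h ^ 2 / 2 * Complex.I_mul_I
  rw [key]
  have p1 : ‖-Complex.I * (t : ℂ) * h‖ ^ 3 ≤ ‖h‖ ^ 3 := by gcongr
  have p2 : ‖-Complex.I * h‖ ^ 3 ≤ ‖h‖ ^ 3 := by gcongr
  refine (norm_add_le _ _).trans ?_
  rw [norm_mul, norm_mul]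
  have q1 : ‖a‖ * ‖Complex.exp (-Complex.I * (t : ℂ) * h) - (1 + (-Complex.I * (t : ℂ) * h)
        + (-Complex.I * (t : ℂ) * h) ^ 2 / 2)‖ ≤ 3 * (‖h‖ ^ 3 * (1 / 3)) := by
    gcongr; linarith
  have q2 : ‖b‖ * ‖Complex.exp (-Complex.I * h) - (1 + (-Complex.I * h)
        + (-Complex.I * h) ^ 2 / 2)‖ ≤ 3 * (‖h‖ ^ 3 * (1 / 3)) := by
    gcongr; linarith
  linarith

/-- Small values are close to zeroes, for small `ε`. -/
lemma exists_zero_near {t : ℝ} (ht : t ∈ Set.Icc (0 : ℝ) 1) {a b : ℂ} (ha : 9 / 25 ≤ ‖a‖)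
    (ha' : ‖a‖ ≤ 3) (hb : 9 / 25 ≤ ‖b‖) (hb' : ‖b‖ ≤ 3) {s : ℝ} (hs : 0 < s)
    (hs' : 6400 * s ≤ 1 / 3200) (hab : ‖1 + a + b‖ ≤ s ^ 2) :
    ∃ w, ‖w‖ ≤ 6400 * s ∧ expSum t a b w = 0 := by
  have hnd := nondegenerate ht ha ha' hb (by nlinarith)
  obtain ⟨r, hr⟩ : ∃ r, r = 6400 * s := ⟨_, rfl⟩
  have hr0 : 0 < r := by rw [hr]; positivity
  rw [← hr] at hs' ⊢
  obtain ⟨m, hm⟩ : ∃ m, m = ‖t * a + b‖ := ⟨_, rfl⟩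
  obtain ⟨n, hn⟩ : ∃ n, n = ‖(t : ℂ) ^ 2 * a + b‖ := ⟨_, rfl⟩
  have hn6 : n ≤ 6 := by
    have : ‖(t : ℂ) ^ 2 * a‖ ≤ 3 := by
      rw [norm_mul, norm_pow, Complex.norm_real, Real.norm_of_nonneg ht.1]
      have : t ^ 2 ≤ 1 := pow_le_one₀ ht.1 ht.2
      nlinarith [norm_nonneg a]
    rw [hn]
    exact (norm_add_le _ _).trans (by linarith)
  rw [← hm, ← hn] at hnd
  -- two lower bounds
  have lower : ∀ ρ : ℝ, 0 < ρ → ρ ≤ 1 → ∀ z ∈ Metric.sphere (0 : ℂ) ρ,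
      m * ρ - n * ρ ^ 2 / 2 - 2 * ρ ^ 3 ≤ ‖expSum t a b z - expSum t a b 0‖ ∧
      n * ρ ^ 2 / 2 - m * ρ - 2 * ρ ^ 3 ≤ ‖expSum t a b z - expSum t a b 0‖ := by
    intro ρ hρ hρ1 z hz
    have hz' : ‖z‖ = ρ := by simpa using hz
    have hT := expSum_taylor ht ha' hb' (h := z) (by linarith)
    rw [hz'] at hT
    have n1 : ‖Complex.I * (t * a + b) * z‖ = m * ρ := by
      rw [norm_mul, norm_mul, Complex.norm_I, hz', ← hm]; ring
    have n2 : ‖((t : ℂ) ^ 2 * a + b) * z ^ 2 / 2‖ = n * ρ ^ 2 / 2 := by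
      rw [norm_div, norm_mul, norm_pow, hz', ← hn]; simp
    set X := expSum t a b z - expSum t a b 0
    set P := Complex.I * (t * a + b) * z
    set Q := ((t : ℂ) ^ 2 * a + b) * z ^ 2 / 2
    have k1 : ‖P‖ ≤ ‖X + (P + Q)‖ + (‖X‖ + ‖Q‖) := by
      have : P = (X + (P + Q)) - (X + Q) := by ring
      calc ‖P‖ = ‖(X + (P + Q)) - (X + Q)‖ := by rw [← this]
        _ ≤ _ := (norm_sub_le _ _).trans (by gcongr; exact norm_add_le _ _)
    have k2 : ‖Q‖ ≤ ‖X + (P + Q)‖ + (‖X‖ + ‖P‖) := by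
      have : Q = (X + (P + Q)) - (X + P) := by ring
      calc ‖Q‖ = ‖(X + (P + Q)) - (X + P)‖ := by rw [← this]
        _ ≤ _ := (norm_sub_le _ _).trans (by gcongr; exact norm_add_le _ _)
    constructor <;> linarith
  have hδ : ‖expSum t a b 0‖ < (3 * s ^ 2) / 2 := by
    rw [expSum_zero]; nlinarith
  have hs2 : s ^ 2 = r ^ 2 / 40960000 := by rw [hr]; ring
  by_cases hmr : m ≤ r / 800
  · have hn' : 1 / 200 ≤ n := by
      rcases hnd with h | h
      · linarith
      · exact h
    obtain ⟨w, hw, hw0⟩ := exists_zero_of_sphere (differentiable_expSum t a b) hr0 (z0 := 0)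
      (δ := 3 * s ^ 2) (fun z hz => by
        refine le_trans ?_ (lower r hr0 (by linarith) z hz).2
        rw [hs2]
        have e1 : m * r ≤ r ^ 2 / 800 := by nlinarith
        have e2 : r ^ 3 ≤ r ^ 2 / 3200 := by nlinarith [sq_nonneg r]
        have e3 : r ^ 2 * (1 / 200) ≤ n * r ^ 2 := by nlinarith [sq_nonneg r]
        nlinarith [sq_nonneg r]) hδ
    exact ⟨w, by simpa using hw, hw0⟩
  · push Not at hmr
    obtain ⟨w, hw, hw0⟩ := exists_zero_of_sphere (differentiable_expSum t a b)
      (ρ := r / 8000) (by positivity) (z0 := 0)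
      (δ := 3 * s ^ 2) (fun z hz => by
        refine le_trans ?_ (lower (r / 8000) (by positivity) (by linarith) z hz).1
        rw [hs2]
        have e1 : r ^ 2 / 800 ≤ m * r := by nlinarith
        have e2 : r ^ 3 ≤ r ^ 2 / 3200 := by nlinarith [sq_nonneg r]
        have e3 : n * r ^ 2 ≤ r ^ 2 * 6 := by nlinarith [sq_nonneg r]
        have e4 := sq_nonneg r
        nlinarith) hδ
    refine ⟨w, ?_, hw0⟩
    have : ‖w‖ ≤ r / 8000 := by simpa using hw
    linarith

/-- A zero-free three-term sum does not exist for `0 < t < 1`. -/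
lemma exists_zero_mid {t : ℝ} (ht0 : 0 < t) (ht1 : t < 1) {a b : ℂ} (ha : a ≠ 0) (hb : b ≠ 0) :
    ∃ w, expSum t a b w = 0 := by
  by_contra! hne
  have hF := differentiable_expSum t a b
  have hF' : Differentiable ℂ (deriv (expSum t a b)) := by
    intro z
    exact ((hF.analyticAt z).deriv).differentiableAt
  have hh : Differentiable ℂ (fun w => deriv (expSum t a b) w / expSum t a b w) :=
    hF'.div hF hne
  obtain ⟨g, hg0, hg⟩ := hh.isExactOn_univ.with_val_at 0 (Complex.log (expSum t a b 0))
  have hgd : Differentiable ℂ g := fun w => (hg w (Set.mem_univ _)).differentiableAt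
  have hgexp : ∀ w, Complex.exp (g w) = expSum t a b w := by
    have hd : ∀ w, HasDerivAt (fun w => expSum t a b w * Complex.exp (-g w)) 0 w := by
      intro w
      have := (hF w).hasDerivAt.mul ((hg w (Set.mem_univ _)).neg.cexp)
      refine this.congr_deriv ?_
      have := hne w
      field_simp
      ring
    intro w
    have hc := is_const_of_deriv_eq_zero (fun w => (hd w).differentiableAt)
      (fun w => (hd w).deriv) w 0
    simp only [hg0, Complex.exp_neg, Complex.exp_log (hne 0)] at hc
    rw [mul_inv_cancel₀ (hne 0)] at hc
    exact (mul_inv_eq_one₀ (Complex.exp_ne_zero _)).1 hc |>.symm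
  have hre : ∀ w, (g w).re ≤ (1 + ‖a‖ + ‖b‖) + ‖w‖ := by
    intro w
    have h1 : Real.exp ((g w).re) ≤ (1 + ‖a‖ + ‖b‖) * Real.exp ‖w‖ := by
      rw [← Complex.norm_exp, hgexp, expSum]
      have e1 : ‖Complex.exp (-Complex.I * (t : ℂ) * w)‖ ≤ Real.exp ‖w‖ := by
        rw [Complex.norm_exp]
        apply Real.exp_le_exp.2
        refine (Complex.re_le_norm _).trans ?_
        simp only [norm_mul, norm_neg, Complex.norm_I, Complex.norm_real,
          Real.norm_of_nonneg ht0.le]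
        nlinarith [norm_nonneg w]
      have e2 : ‖Complex.exp (-Complex.I * w)‖ ≤ Real.exp ‖w‖ := by
        rw [Complex.norm_exp]
        apply Real.exp_le_exp.2
        exact (Complex.re_le_norm _).trans (by simp)
      have e3 : 1 ≤ Real.exp ‖w‖ := Real.one_le_exp (norm_nonneg _)
      calc _ ≤ ‖(1 : ℂ)‖ + ‖a * Complex.exp (-Complex.I * (t : ℂ) * w)‖ +
            ‖b * Complex.exp (-Complex.I * w)‖ := norm_add₃_le
        _ ≤ 1 * Real.exp ‖w‖ + ‖a‖ * Real.exp ‖w‖ + ‖b‖ * Real.exp ‖w‖ := by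
          rw [norm_mul, norm_mul]
          gcongr
          simpa using e3
        _ = _ := by ring
    have h2 : (1 + ‖a‖ + ‖b‖) * Real.exp ‖w‖ ≤ Real.exp ((1 + ‖a‖ + ‖b‖) + ‖w‖) := by
      rw [Real.exp_add]
      gcongr
      have := Real.add_one_le_exp (1 + ‖a‖ + ‖b‖)
      linarith
    exact Real.exp_le_exp.1 (h1.trans h2)
  set K := 1 + ‖a‖ + ‖b‖ with hK
  have hK0 : 0 < K := by positivity
  have hbd : ∀ c, ‖deriv (expSum t a b) c / expSum t a b c‖ ≤ 2 * K + 8 + 3 * ‖g 0‖ := by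
    intro c
    rw [← (hg c (Set.mem_univ _)).deriv]
    set ρ := ‖c‖ + 1 with hρ
    have hc0 := norm_nonneg c
    have hρ1 : 1 ≤ ρ := by linarith
    have hB : ∀ z ∈ Metric.sphere c ρ, ‖g z‖ ≤ 2 * (K + 4 * ρ) + 3 * ‖g 0‖ := by
      intro z hz
      have hz2 : ‖z‖ ≤ 2 * ρ := by
        have h1 : ‖z - c‖ = ρ := by simpa [dist_eq_norm] using hz
        have h2 : ‖z‖ ≤ ‖z - c‖ + ‖c‖ := norm_le_norm_sub_add _ _
        linarith
      have h := Complex.borelCaratheodory (f := g) (M := K + 4 * ρ) (R := 4 * ρ) (z := z)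
        (by positivity) hgd.differentiableOn
        (fun w hw => by
          have : ‖w‖ < 4 * ρ := by simpa using hw
          have := hre w
          simp only [Set.mem_ofPred_eq]
          linarith) (by positivity) (by simp; linarith)
      refine h.trans ?_
      have hpos : 0 < 4 * ρ - ‖z‖ := by linarith
      rw [← add_div, div_le_iff₀ hpos]
      have hK4 : 0 < K + 4 * ρ := by positivity
      nlinarith [norm_nonneg (g 0), norm_nonneg z]
    have := Complex.norm_deriv_le_of_forall_mem_sphere_norm_le (by linarith : 0 < ρ)
      hgd.diffContOnCl hB
    refine this.trans ?_
    rw [div_le_iff₀ (by linarith)]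
    nlinarith [norm_nonneg (g 0)]
  have hconst : ∀ w, deriv (expSum t a b) w / expSum t a b w =
      deriv (expSum t a b) 0 / expSum t a b 0 := by
    intro w
    refine hh.apply_eq_apply_of_bounded ?_ w 0
    rw [isBounded_iff_forall_norm_le]
    refine ⟨2 * K + 8 + 3 * ‖g 0‖, ?_⟩
    rintro _ ⟨c, rfl⟩
    exact hbd c
  set α := deriv (expSum t a b) 0 / expSum t a b 0
  have hzero : ∀ w : ℂ, α + ((α + Complex.I * t) * a) * Complex.exp (-Complex.I * (t : ℂ) * w)
      + ((α + Complex.I) * b) * Complex.exp (-Complex.I * w) = 0 := by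
    intro w
    have h1 := hconst w
    have hd : deriv (expSum t a b) w = _ := (hasDerivAt_threeTerm t 1 a b w).deriv
    rw [div_eq_iff (hne w), hd, expSum] at h1
    linear_combination -h1
  obtain ⟨-, k1, k2⟩ := threeTerm_eq_zero hzero
  have ht0' : (t : ℂ) ≠ 0 := by exact_mod_cast ht0.ne'
  have ht1' : (t : ℂ) ≠ 1 := by exact_mod_cast ht1.ne
  have k3 : (t : ℂ) * (t - 1) * a * (α + Complex.I * t) = 0 := by linear_combination k2 - k1
  have k4 : α + Complex.I * t = 0 := by
    refine (mul_eq_zero.1 k3).resolve_left ?_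
    exact mul_ne_zero (mul_ne_zero ht0' (sub_ne_zero.2 ht1')) ha
  rw [k4] at k1
  have k5 : α + Complex.I = 0 := by
    have : (α + Complex.I) * b = 0 := by linear_combination k1
    exact (mul_eq_zero.1 this).resolve_right hb
  have k6 : Complex.I * ((t : ℂ) - 1) = 0 := by linear_combination k4 - k5
  rcases mul_eq_zero.1 k6 with h | h
  · exact Complex.I_ne_zero h
  · exact ht1' (sub_eq_zero.1 h)

lemma exists_exp_eq {c : ℂ} (hc : c ≠ 0) : ∃ w : ℂ, Complex.exp (-Complex.I * w) = c := by
  refine ⟨Complex.I * Complex.log c, ?_⟩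
  have : -Complex.I * (Complex.I * Complex.log c) = Complex.log c := by
    linear_combination -Complex.log c * Complex.I_mul_I
  rw [this, Complex.exp_log hc]

lemma exists_zero_all {t : ℝ} (ht : t ∈ Set.Icc (0 : ℝ) 1) {a b : ℂ} (ha : 9 / 25 ≤ ‖a‖)
    (hb : 9 / 25 ≤ ‖b‖) (hab : ‖1 + a + b‖ ≤ 1 / 3) :
    ∃ w, expSum t a b w = 0 := by
  have ha0 : a ≠ 0 := by rintro rfl; norm_num at ha
  have hb0 : b ≠ 0 := by rintro rfl; norm_num at hb
  rcases eq_or_lt_of_le ht.1 with h0 | h0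
  · have h1 : 1 + a ≠ 0 := by
      intro h; rw [h, zero_add] at hab; linarith
    obtain ⟨w, hw⟩ := exists_exp_eq (c := -(1 + a) / b) (div_ne_zero (neg_ne_zero.2 h1) hb0)
    refine ⟨w, ?_⟩
    rw [expSum, hw, ← h0]
    simp
    field_simp
    ring
  rcases eq_or_lt_of_le ht.2 with h1 | h1
  · have h2 : a + b ≠ 0 := by
      intro h; rw [add_assoc, h, add_zero] at hab; norm_num at hab
    obtain ⟨w, hw⟩ := exists_exp_eq (c := -1 / (a + b)) (div_ne_zero (by norm_num) h2)
    refine ⟨w, ?_⟩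
    rw [expSum, h1]
    simp only [Complex.ofReal_one, mul_one]
    rw [hw]
    field_simp
    ring
  · exact exists_zero_mid h0 h1 ha0 hb0

open Topology Filter in
/-- Uniform bound on the distance to the nearest zero. -/
lemma exists_uniform_radius : ∃ R : ℝ, ∀ t ∈ Set.Icc (0 : ℝ) 1, ∀ a b : ℂ, 9 / 25 ≤ ‖a‖ →
    ‖a‖ ≤ 3 → 9 / 25 ≤ ‖b‖ → ‖b‖ ≤ 3 → ‖1 + a + b‖ ≤ 1 / 3 →
    ∃ w, ‖w‖ ≤ R ∧ expSum t a b w = 0 := by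
  let K : Set (ℝ × ℂ × ℂ) := (Set.Icc (0 : ℝ) 1 ×ˢ (Metric.closedBall (0 : ℂ) 3 ×ˢ
    Metric.closedBall (0 : ℂ) 3)) ∩ {p | 9 / 25 ≤ ‖p.2.1‖ ∧ 9 / 25 ≤ ‖p.2.2‖ ∧
      ‖1 + p.2.1 + p.2.2‖ ≤ 1 / 3}
  have hK : IsCompact K := by
    refine (isCompact_Icc.prod ((isCompact_closedBall _ _).prod
      (isCompact_closedBall _ _))).inter_right ?_
    refine IsClosed.and ?_ (IsClosed.and ?_ ?_)
    · exact isClosed_le continuous_const (by fun_prop)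
    · exact isClosed_le continuous_const (by fun_prop)
    · exact isClosed_le (by fun_prop) continuous_const
  have hcont : Continuous (fun q : (ℝ × ℂ × ℂ) × ℂ => expSum q.1.1 q.1.2.1 q.1.2.2 q.2) := by
    unfold expSum; fun_prop
  have main : ∃ R : ℝ, ∀ p ∈ K, ∃ w, ‖w‖ ≤ R ∧ expSum p.1 p.2.1 p.2.2 w = 0 := by
    refine hK.induction_on (p := fun s => ∃ R : ℝ, ∀ p ∈ s, ∃ w, ‖w‖ ≤ R ∧
      expSum p.1 p.2.1 p.2.2 w = 0) ⟨0, by simp⟩ ?_ ?_ ?_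
    · rintro s s' hss ⟨R, hR⟩
      exact ⟨R, fun p hp => hR p (hss hp)⟩
    · rintro s s' ⟨R, hR⟩ ⟨R', hR'⟩
      refine ⟨max R R', fun p hp => ?_⟩
      rcases hp with hp | hp
      · obtain ⟨w, h1, h2⟩ := hR p hp
        exact ⟨w, h1.trans (le_max_left _ _), h2⟩
      · obtain ⟨w, h1, h2⟩ := hR' p hp
        exact ⟨w, h1.trans (le_max_right _ _), h2⟩
    · rintro ⟨t, a, b⟩ hp
      simp only [K, Set.mem_inter_iff, Set.mem_prod, Metric.mem_closedBall, dist_zero_right,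
        Set.mem_ofPred_eq] at hp
      obtain ⟨⟨ht, ha', hb'⟩, ha, hb, hab⟩ := hp
      obtain ⟨w0, hw0⟩ := exists_zero_all ht ha hb hab
      have hF := differentiable_expSum t a b
      have hnz : ∀ᶠ z in 𝓝[≠] w0, expSum t a b z ≠ 0 := by
        refine (hF.analyticAt w0).eventually_eq_zero_or_eventually_ne_zero.resolve_left ?_
        intro hev
        have h1 : AnalyticOnNhd ℂ (expSum t a b) Set.univ := fun z _ => hF.analyticAt z
        have h2 : expSum t a b = fun _ => 0 := h1.eq_of_eventuallyEq analyticOnNhd_const hev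
        obtain ⟨-, k1, k2⟩ := threeTerm_eq_zero (fun w => congrFun h2 w)
        have := nondegenerate ht ha ha' hb hab
        rw [k1, k2] at this
        norm_num at this
      rw [eventually_nhdsWithin_iff, Metric.eventually_nhds_iff] at hnz
      obtain ⟨ρ', hρ', hnz⟩ := hnz
      obtain ⟨ρ, hρdef⟩ : ∃ ρ, ρ = ρ' / 2 := ⟨_, rfl⟩
      have hρ : 0 < ρ := by rw [hρdef]; positivity
      have hsph : ∀ z ∈ Metric.sphere w0 ρ, expSum t a b z ≠ 0 := by
        intro z hz
        have hz' : dist z w0 = ρ := hz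
        refine hnz (by rw [hz']; linarith) ?_
        rintro (rfl : z = w0)
        rw [dist_self] at hz'
        linarith
      have hsc : IsCompact (Metric.sphere w0 ρ) := isCompact_sphere _ _
      have hsne : (Metric.sphere w0 ρ).Nonempty := NormedSpace.sphere_nonempty.2 hρ.le
      obtain ⟨zm, hzm, hmin⟩ := hsc.exists_isMinOn hsne (f := fun z => ‖expSum t a b z‖)
        hF.continuous.norm.continuousOn
      obtain ⟨δ, hδ⟩ : ∃ δ, δ = ‖expSum t a b zm‖ := ⟨_, rfl⟩
      have hδ0 : 0 < δ := by rw [hδ]; exact norm_pos_iff.2 (hsph zm hzm)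
      have ev1 : ∀ᶠ q : ℝ × ℂ × ℂ in 𝓝 (t, a, b), ∀ z ∈ Metric.sphere w0 ρ,
          δ / 2 ≤ ‖expSum q.1 q.2.1 q.2.2 z - expSum q.1 q.2.1 q.2.2 w0‖ := by
        refine hsc.eventually_forall_of_forall_eventually ?_
        intro z hz
        have hc : Continuous (fun q : (ℝ × ℂ × ℂ) × ℂ =>
            ‖expSum q.1.1 q.1.2.1 q.1.2.2 q.2 - expSum q.1.1 q.1.2.1 q.1.2.2 w0‖) := by
          unfold expSum; fun_prop
        have hlt : δ / 2 < ‖expSum t a b z - expSum t a b w0‖ := by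
          rw [hw0, sub_zero]
          have : ‖expSum t a b zm‖ ≤ ‖expSum t a b z‖ := hmin hz
          linarith
        have := hc.continuousAt (x := ((t, a, b), z)) |>.eventually (lt_mem_nhds hlt)
        filter_upwards [this] with q hq using hq.le
      have ev2 : ∀ᶠ q : ℝ × ℂ × ℂ in 𝓝 (t, a, b),
          ‖expSum q.1 q.2.1 q.2.2 w0‖ < δ / 2 / 2 := by
        have hc : Continuous (fun q : ℝ × ℂ × ℂ => ‖expSum q.1 q.2.1 q.2.2 w0‖) := by
          unfold expSum; fun_prop
        refine hc.continuousAt (x := (t, a, b)) |>.eventually (gt_mem_nhds ?_)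
        simp only [hw0, norm_zero]
        positivity
      refine ⟨_, mem_nhdsWithin_of_mem_nhds (ev1.and ev2), ‖w0‖ + ρ, ?_⟩
      rintro q ⟨h1, h2⟩
      obtain ⟨w, hw, hwz⟩ := exists_zero_of_sphere
        (differentiable_expSum q.1 q.2.1 q.2.2) hρ h1 h2
      refine ⟨w, ?_, hwz⟩
      have : ‖w‖ ≤ ‖w - w0‖ + ‖w0‖ := norm_le_norm_sub_add _ _
      linarith
  obtain ⟨R, hR⟩ := main
  refine ⟨R, fun t ht a b ha ha' hb hb' hab => hR (t, a, b) ?_⟩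
  simp only [K, Set.mem_inter_iff, Set.mem_prod, Metric.mem_closedBall, dist_zero_right,
        Set.mem_ofPred_eq]
  exact ⟨⟨ht, ha', hb'⟩, ha, hb, hab⟩

/-- Many zeroes in the unit disc force small values there. -/
lemma norm_le_of_zeros (Z : Finset ℂ) : ∀ (f : ℂ → ℂ) (B : ℝ), Differentiable ℂ f →
    (∀ z ∈ Z, ‖z‖ ≤ 1 ∧ f z = 0) → (∀ z ∈ Metric.closedBall (0 : ℂ) 5, ‖f z‖ ≤ B) →
    ∀ w ∈ Metric.closedBall (0 : ℂ) 1, ‖f w‖ ≤ B / 2 ^ Z.card := by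
  classical
  induction Z using Finset.induction_on with
  | empty =>
    intro f B _ _ hB w hw
    simpa using hB w (Metric.closedBall_subset_closedBall (by norm_num) hw)
  | insert z0 Z hz0 ih =>
    intro f B hf hZ hB w hw
    obtain ⟨hz1, hfz⟩ := hZ z0 (Finset.mem_insert_self _ _)
    have hmul : ∀ z, f z = (z - z0) * dslope f z0 z := by
      intro z
      have := sub_smul_dslope f z0 z
      rw [hfz, sub_zero, smul_eq_mul] at this
      exact this.symm
    have hg : Differentiable ℂ (dslope f z0) := by
      rw [← differentiableOn_univ]
      exact (Complex.differentiableOn_dslope Filter.univ_mem).2 hf.differentiableOn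
    have hgZ : ∀ z ∈ Z, ‖z‖ ≤ 1 ∧ dslope f z0 z = 0 := by
      intro z hz
      obtain ⟨h1, h2⟩ := hZ z (Finset.mem_insert_of_mem hz)
      refine ⟨h1, ?_⟩
      rw [hmul z] at h2
      refine (mul_eq_zero.1 h2).resolve_left (sub_ne_zero.2 ?_)
      rintro rfl
      exact hz0 hz
    have hgB : ∀ z ∈ Metric.closedBall (0 : ℂ) 5, ‖dslope f z0 z‖ ≤ B / 4 := by
      intro z hz
      refine Complex.norm_le_of_forall_mem_frontier_norm_le (Metric.isBounded_ball (x := 0)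
        (r := 5)) hg.diffContOnCl ?_ (by rwa [closure_ball _ (by norm_num)])
      intro y hy
      rw [frontier_ball _ (by norm_num)] at hy
      have hy5 : ‖y‖ = 5 := by simpa using hy
      have h1 := hB y (Metric.sphere_subset_closedBall hy)
      rw [hmul y, norm_mul] at h1
      have h2 : 4 ≤ ‖y - z0‖ := by
        have := norm_sub_norm_le y z0
        linarith
      nlinarith [norm_nonneg (dslope f z0 y)]
    have h := ih _ _ hg hgZ hgB w hw
    rw [Finset.card_insert_of_notMem hz0, hmul w, norm_mul]
    have hw1 : ‖w‖ ≤ 1 := by simpa using hw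
    have h2 : ‖w - z0‖ ≤ 2 := (norm_sub_le _ _).trans (by linarith)
    calc ‖w - z0‖ * ‖dslope f z0 w‖ ≤ 2 * (B / 4 / 2 ^ Z.card) := by gcongr
      _ = B / 2 ^ (Z.card + 1) := by rw [pow_succ]; field_simp; ring

lemma card_zeros_le {t : ℝ} (ht : t ∈ Set.Icc (0 : ℝ) 1) {a b : ℂ} (ha : ‖a‖ = 1)
    (hb : ‖b‖ = 1) (Z : Finset ℂ) (hZ : ∀ z ∈ Z, ‖z‖ ≤ 1 ∧ expSum t a b z = 0) :
    Z.card ≤ 20 := by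
  by_contra! hcard
  have hF := differentiable_expSum t a b
  have hB : ∀ z ∈ Metric.closedBall (0 : ℂ) 5, ‖expSum t a b z‖ ≤ 487 := by
    intro z hz
    have hz5 : ‖z‖ ≤ 5 := by simpa using hz
    have he : Real.exp 5 ≤ 243 := by
      have h1 : Real.exp 5 = Real.exp 1 ^ 5 := by rw [← Real.exp_nat_mul]; norm_num
      have h2 : Real.exp 1 ≤ 3 := by linarith [Real.exp_one_lt_d9]
      rw [h1]
      calc Real.exp 1 ^ 5 ≤ 3 ^ 5 := by gcongr
        _ = 243 := by norm_num
    have e1 : ‖Complex.exp (-Complex.I * (t : ℂ) * z)‖ ≤ Real.exp 5 := by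
      rw [Complex.norm_exp]
      apply Real.exp_le_exp.2
      refine (Complex.re_le_norm _).trans ?_
      simp only [norm_mul, norm_neg, Complex.norm_I, Complex.norm_real,
        Real.norm_of_nonneg ht.1]
      nlinarith [norm_nonneg z, ht.1, ht.2]
    have e2 : ‖Complex.exp (-Complex.I * z)‖ ≤ Real.exp 5 := by
      rw [Complex.norm_exp]
      apply Real.exp_le_exp.2
      exact (Complex.re_le_norm _).trans (by simpa using hz5)
    calc _ ≤ ‖(1 : ℂ)‖ + ‖a * Complex.exp (-Complex.I * (t : ℂ) * z)‖ +
            ‖b * Complex.exp (-Complex.I * z)‖ := norm_add₃_le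
      _ ≤ 487 := by
        rw [norm_mul, norm_mul, ha, hb, norm_one]; linarith
  have hsmall : ∀ w ∈ Metric.closedBall (0 : ℂ) 1, ‖expSum t a b w‖ ≤ 1 / 1000 := by
    intro w hw
    refine (norm_le_of_zeros Z _ _ hF hZ hB w hw).trans ?_
    rw [div_le_iff₀ (by positivity)]
    have : (2 : ℝ) ^ 20 ≤ 2 ^ Z.card := pow_le_pow_right₀ (by norm_num) hcard.le
    norm_num at this
    linarith
  have hsph : ∀ w ∈ Metric.sphere (0 : ℂ) 1, ‖expSum t a b w‖ ≤ 1 / 1000 :=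
    fun w hw => hsmall w (Metric.sphere_subset_closedBall hw)
  have hd1 : deriv (expSum t a b) = fun w =>
      0 + (-Complex.I * t * a) * Complex.exp (-Complex.I * (t : ℂ) * w)
      + (-Complex.I * b) * Complex.exp (-Complex.I * w) :=
    funext fun w => (hasDerivAt_threeTerm t 1 a b w : HasDerivAt (expSum t a b) _ w).deriv
  have d1 := Complex.norm_iteratedDeriv_le_of_forall_mem_sphere_norm_le 1 one_pos
    hF.diffContOnCl hsph
  have d2 := Complex.norm_iteratedDeriv_le_of_forall_mem_sphere_norm_le 2 one_pos
    hF.diffContOnCl hsph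
  rw [iteratedDeriv_one, hd1] at d1
  rw [iteratedDeriv_succ, iteratedDeriv_one, hd1,
    (hasDerivAt_threeTerm t 0 (-Complex.I * t * a) (-Complex.I * b) 0).deriv] at d2
  have q1 : ‖t * a + b‖ ≤ 1 / 1000 := by
    have : t * a + b = Complex.I * (0 + (-Complex.I * t * a) *
      Complex.exp (-Complex.I * (t : ℂ) * 0) + (-Complex.I * b) *
      Complex.exp (-Complex.I * 0)) := by
      simp only [mul_zero, Complex.exp_zero, mul_one]
      linear_combination (t * a + b) * Complex.I_mul_I
    rw [this, norm_mul, Complex.norm_I, one_mul]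
    simpa using d1
  have q2 : ‖(t : ℂ) ^ 2 * a + b‖ ≤ 2 / 1000 := by
    have : (t : ℂ) ^ 2 * a + b = -(0 + (-Complex.I * t * (-Complex.I * t * a)) *
      Complex.exp (-Complex.I * (t : ℂ) * 0) + (-Complex.I * (-Complex.I * b)) *
      Complex.exp (-Complex.I * 0)) := by
      simp only [mul_zero, Complex.exp_zero, mul_one]
      linear_combination (t ^ 2 * a + b) * Complex.I_mul_I
    rw [this, norm_neg]
    refine d2.trans ?_
    norm_num [Nat.factorial]
  have h0 := hsmall 0 (by simp)
  rw [expSum_zero] at h0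
  rcases nondegenerate ht (by rw [ha]; norm_num) (by rw [ha]; norm_num)
    (by rw [hb]; norm_num) (by linarith) with h | h <;> linarith

lemma phiTilde_add (t : ℝ) (z w : ℂ) : phiTilde t (z + w) =
    expSum t (Complex.exp (-Complex.I * t * z)) (Complex.exp (-Complex.I * z)) w := by
  rw [phiTilde, expSum, ← Complex.exp_add, ← Complex.exp_add, mul_add, mul_add]

/-- In every unit disc centered at a real point, `φ̃_t` has at most `M` zeroes, and
the set where `|φ̃_t| ≤ ε` is contained in the `C·ε^{1/M}`-neighborhoods of the zeroes. -/
theorem phiTilde_zeroes_and_small_values :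
    ∃ M : ℕ, 1 ≤ M ∧ ∃ C > (0:ℝ), ∀ t ∈ Set.Icc (0:ℝ) 1, ∀ x : ℝ,
      (∀ Z : Finset ℂ, (∀ z ∈ Z, z ∈ Metric.ball (x : ℂ) 1 ∧ phiTilde t z = 0) →
        Z.card ≤ M) ∧
      (∀ ε : ℝ, 0 < ε → ε < 1 / 3 → ∀ z ∈ Metric.ball (x : ℂ) 1,
        ‖phiTilde t z‖ ≤ ε →
        ∃ lam : ℂ, phiTilde t lam = 0 ∧ ‖z - lam‖ ≤ C * ε ^ ((M : ℝ)⁻¹)) := by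
  obtain ⟨R, hR⟩ := exists_uniform_radius
  obtain ⟨s0, hs0⟩ : ∃ s0 : ℝ, s0 = 1 / 20480000 := ⟨_, rfl⟩
  have hs0pos : 0 < s0 := by rw [hs0]; norm_num
  refine ⟨20, by norm_num, 6400 + |R| / s0 ^ 2, by positivity, fun t ht x => ⟨?_, ?_⟩⟩
  · intro Z hZ
    have hn : ∀ s : ℝ, ‖Complex.exp (-Complex.I * s * x)‖ = 1 := by
      intro s
      rw [Complex.norm_exp]
      simp
    have h1 := hn 1
    simp only [Complex.ofReal_one, mul_one] at h1
    have := card_zeros_le ht (hn t) h1 (Z.map (addRightEmbedding (-(x : ℂ)))) (by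
      intro z hz
      rw [Finset.mem_map] at hz
      obtain ⟨y, hy, rfl⟩ := hz
      obtain ⟨hy1, hy2⟩ := hZ y hy
      simp only [addRightEmbedding_apply]
      rw [← phiTilde_add]
      constructor
      · have : dist y (x : ℂ) < 1 := hy1
        rw [dist_eq_norm, sub_eq_add_neg] at this
        exact this.le
      · simpa using hy2)
    simpa using this
  · intro ε hε hε3 z hz hphi
    have him : |z.im| ≤ 1 := by
      have h1 : ‖z - x‖ < 1 := by simpa [dist_eq_norm] using hz
      have h2 := Complex.abs_im_le_norm (z - x)
      simp at h2
      linarith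
    obtain ⟨hi1, hi2⟩ := abs_le.1 him
    have hb : ∀ s ∈ Set.Icc (0 : ℝ) 1, 9 / 25 ≤ ‖Complex.exp (-Complex.I * s * z)‖ ∧
        ‖Complex.exp (-Complex.I * s * z)‖ ≤ 3 := by
      intro s hs
      have hre : (-Complex.I * s * z).re = s * z.im := by simp
      rw [Complex.norm_exp, hre]
      have l1 : -1 ≤ s * z.im := by nlinarith [hs.1, hs.2]
      have l2 : s * z.im ≤ 1 := by nlinarith [hs.1, hs.2]
      constructor
      · refine le_trans ?_ (Real.exp_le_exp.2 l1)
        linarith [Real.exp_neg_one_gt_d9]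
      · refine (Real.exp_le_exp.2 l2).trans ?_
        linarith [Real.exp_one_lt_d9]
    obtain ⟨ha, ha'⟩ := hb t ht
    obtain ⟨hb, hb'⟩ := hb 1 (by simp)
    simp only [Complex.ofReal_one, mul_one] at hb hb'
    have hphi' : ‖1 + Complex.exp (-Complex.I * t * z) + Complex.exp (-Complex.I * z)‖ ≤ ε :=
      hphi
    have hp1 : ∀ y : ℝ, 1 / 20 ≤ y → ε ^ y ≤ ε ^ (((20 : ℕ) : ℝ)⁻¹) := by
      intro y hy
      refine Real.rpow_le_rpow_of_exponent_ge hε (by linarith) ?_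
      norm_num at hy ⊢
      exact hy
    have hpos : 0 < ε ^ (((20 : ℕ) : ℝ)⁻¹) := Real.rpow_pos_of_pos hε _
    have fin : ∃ w, expSum t (Complex.exp (-Complex.I * t * z)) (Complex.exp (-Complex.I * z)) w
        = 0 ∧ ‖w‖ ≤ (6400 + |R| / s0 ^ 2) * ε ^ (((20 : ℕ) : ℝ)⁻¹) := by
      by_cases hsm : √ε ≤ s0
      · obtain ⟨w, hw, hw0⟩ := exists_zero_near ht ha ha' hb hb' (Real.sqrt_pos.2 hε)
          (by rw [hs0] at hsm; linarith) (by rw [Real.sq_sqrt hε.le]; exact hphi')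
        refine ⟨w, hw0, hw.trans ?_⟩
        have h1 : √ε ≤ ε ^ (((20 : ℕ) : ℝ)⁻¹) := by
          rw [Real.sqrt_eq_rpow]; exact hp1 _ (by norm_num)
        have h2 : 0 ≤ |R| / s0 ^ 2 := by positivity
        nlinarith
      · push Not at hsm
        obtain ⟨w, hw, hw0⟩ := hR t ht _ _ ha ha' hb hb' (hphi'.trans hε3.le)
        refine ⟨w, hw0, hw.trans ?_⟩
        have h1 : s0 ^ 2 ≤ ε := by
          rw [← Real.sq_sqrt hε.le]; gcongr
        have h2 : ε ≤ ε ^ (((20 : ℕ) : ℝ)⁻¹) := by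
          have := hp1 1 (by norm_num)
          rwa [Real.rpow_one] at this
        calc R ≤ |R| := le_abs_self R
          _ = |R| / s0 ^ 2 * s0 ^ 2 := by field_simp
          _ ≤ |R| / s0 ^ 2 * ε ^ (((20 : ℕ) : ℝ)⁻¹) := by gcongr; exact h1.trans h2
          _ ≤ _ := by nlinarith
    obtain ⟨w, hw0, hw⟩ := fin
    refine ⟨z + w, by rw [phiTilde_add]; exact hw0, ?_⟩
    rw [show z - (z + w) = -w by ring, norm_neg]
    exact hw
end

section
/- There is an absolute constant c > 0 with the following property. Let z_0, τ_0 ∈ ℂ and δ_1, δ_2, η, C > 0, and let Φ(z,τ) be a function holomorphic in each of the two complex variables on B(z_0, δ_1) × B(τ_0, δ_2), with Φ(z_0, τ_0) = 0, |∂Φ/∂z(z,τ)| ≥ η and |∂Φ/∂τ(z,τ)| ≤ C for all (z,τ) ∈ B(z_0, δ_1) × B(τ_0, δ_2). Set ε := min(c·δ_1·η/C, δ_2). Then there exists a unique holomorphic function λ : B(τ_0, ε) → B(z_0, δ_1) such that λ(τ_0) = z_0 and Φ(λ(τ), τ) = 0 for all τ ∈ B(τ_0, ε); moreover λ'(τ)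 = −(∂Φ/∂τ)(λ(τ), τ) / (∂Φ/∂z)(λ(τ), τ) for all τ ∈ B(τ_0, ε). -/
open Metric

/-- Separately holomorphic and jointly continuous on `U × V`. -/
def SepHol (U V : Set ℂ) (Ψ : ℂ → ℂ → ℂ) : Prop :=
  (∀ τ ∈ V, DifferentiableOn ℂ (fun z => Ψ z τ) U) ∧
  (∀ z ∈ U, DifferentiableOn ℂ (fun τ => Ψ z τ) V) ∧
  (∀ z ∈ U, ∀ τ ∈ V, ContinuousAt (fun p : ℂ × ℂ => Ψ p.1 p.2) (z, τ))

theorem SepHol.swap {U V : Set ℂ} {Ψ : ℂ → ℂ → ℂ} (h : SepHol U V Ψ) :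
    SepHol V U (fun τ z => Ψ z τ) := by
  refine ⟨h.2.1, h.1, fun τ hτ z hz => ?_⟩
  have h1 := h.2.2 z hz τ hτ
  have h2 : ContinuousAt (Prod.swap : ℂ × ℂ → ℂ × ℂ) (τ, z) := continuous_swap.continuousAt
  exact ContinuousAt.comp (f := (Prod.swap : ℂ × ℂ → ℂ × ℂ)) (x := (τ, z)) h1 h2

theorem SepHol.cont_deriv {U V : Set ℂ} (hU : IsOpen U) (hV : IsOpen V) {Ψ : ℂ → ℂ → ℂ}
    (h : SepHol U V Ψ) {z τ : ℂ} (hz : z ∈ U) (hτ : τ ∈ V) :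
    ContinuousAt (fun p : ℂ × ℂ => deriv (fun z' => Ψ z' p.2) p.1) (z, τ) := by
  have hlu : TendstoLocallyUniformlyOn (fun τ z => Ψ z τ) (fun z => Ψ z τ) (nhds τ) U := by
    rw [Metric.tendstoLocallyUniformlyOn_iff]
    intro ε hε x hx
    have h1 := Metric.tendsto_nhds.1 (h.2.2 x hx τ hτ) (ε / 2) (by positivity)
    rw [nhds_prod_eq] at h1
    obtain ⟨pa, ha, pb, hb, hab⟩ := Filter.eventually_prod_iff.1 h1
    refine ⟨{y | pa y}, mem_nhdsWithin_of_mem_nhds ha, ?_⟩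
    filter_upwards [hb] with n hn y hy
    have e1 := hab hy hn
    have e2 := hab hy hb.self_of_nhds
    calc dist (Ψ y τ) (Ψ y n) ≤ dist (Ψ y τ) (Ψ x τ) + dist (Ψ y n) (Ψ x τ) :=
          dist_triangle_right _ _ _
      _ < ε := by simp only at e1 e2; linarith
  have hd := hlu.deriv (by filter_upwards [hV.mem_nhds hτ] with t ht using h.1 t ht) hU
  rw [Metric.tendstoLocallyUniformlyOn_iff] at hd
  have hc : ContinuousAt (deriv (fun z' => Ψ z' τ)) z :=
    (((h.1 τ hτ).deriv hU).continuousOn).continuousAt (hU.mem_nhds hz)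
  rw [ContinuousAt, Metric.tendsto_nhds]
  intro ε hε
  obtain ⟨t, ht, hev⟩ := hd (ε / 2) (by positivity) z hz
  rw [hU.nhdsWithin_eq hz] at ht
  have hc' := Metric.tendsto_nhds.1 hc (ε / 2) (by positivity)
  rw [nhds_prod_eq]
  refine (Filter.Eventually.prod_mk (hc'.and ht) hev).mono ?_
  rintro ⟨a, b⟩ ⟨⟨h1, h2⟩, h3⟩
  have h4 := h3 a h2
  simp only [Function.comp] at h4
  calc dist (deriv (fun z' => Ψ z' b) a) (deriv (fun z' => Ψ z' τ) z)
      ≤ dist (deriv (fun z' => Ψ z' τ) a) (deriv (fun z' => Ψ z' b) a)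
        + dist (deriv (fun z' => Ψ z' τ) a) (deriv (fun z' => Ψ z' τ) z) :=
          dist_triangle_left _ _ _
    _ < ε := by linarith

theorem SepHol.hasFDerivAt {U V : Set ℂ} (hU : IsOpen U) (hV : IsOpen V) {Ψ : ℂ → ℂ → ℂ}
    (h : SepHol U V Ψ) {z τ : ℂ} (hz : z ∈ U) (hτ : τ ∈ V) :
    HasFDerivAt (fun p : ℂ × ℂ => Ψ p.1 p.2)
      ((ContinuousLinearMap.toSpanSingleton ℂ (deriv (fun z' => Ψ z' τ) z)).coprod
       (ContinuousLinearMap.toSpanSingleton ℂ (deriv (fun τ' => Ψ z τ') τ))) (z, τ) := by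
  have hev : ∀ᶠ v : ℂ × ℂ in nhds (z, τ), v.1 ∈ U ∧ v.2 ∈ V :=
    (hU.prod hV).mem_nhds ⟨hz, hτ⟩
  have c1 := h.cont_deriv hU hV hz hτ
  have c2 : ContinuousAt (fun p : ℂ × ℂ => deriv (fun τ' => Ψ p.1 τ') p.2) (z, τ) :=
    ContinuousAt.comp (f := (Prod.swap : ℂ × ℂ → ℂ × ℂ)) (x := (z, τ))
      (h.swap.cont_deriv hV hU hτ hz) continuous_swap.continuousAt
  have := hasStrictFDerivAt_uncurry_coprod (𝕜 := ℂ) (u := (z, τ)) (f := Ψ)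
    (f₁ := fun a b => ContinuousLinearMap.toSpanSingleton ℂ (deriv (fun z' => Ψ z' b) a))
    (f₂ := fun a b => ContinuousLinearMap.toSpanSingleton ℂ (deriv (fun τ' => Ψ a τ') b))
    (by
      filter_upwards [hev] with v hv
      exact ((h.1 v.2 hv.2).differentiableAt (hU.mem_nhds hv.1)).hasDerivAt.hasFDerivAt)
    (by
      filter_upwards [hev] with v hv
      exact ((h.2.1 v.1 hv.1).differentiableAt (hV.mem_nhds hv.2)).hasDerivAt.hasFDerivAt)
    ((ContinuousLinearMap.toSpanSingletonCLE (𝕜 := ℂ) (E := ℂ)).continuous.continuousAt.comp c1)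
    ((ContinuousLinearMap.toSpanSingletonCLE (𝕜 := ℂ) (E := ℂ)).continuous.continuousAt.comp c2)
  exact this.hasFDerivAt

theorem SepHol.chain {U V : Set ℂ} (hU : IsOpen U) (hV : IsOpen V) {Ψ : ℂ → ℂ → ℂ}
    (h : SepHol U V Ψ) {a : ℂ → ℂ} {a' τ : ℂ} (hz : a τ ∈ U) (hτ : τ ∈ V)
    (ha : HasDerivAt a a' τ) :
    HasDerivAt (fun t => Ψ (a t) t)
      (a' * deriv (fun z' => Ψ z' τ) (a τ) + deriv (fun τ' => Ψ (a τ) τ') τ) τ := by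
  have h1 := h.hasFDerivAt hU hV hz hτ
  have h2 : HasDerivAt (fun t => (a t, t)) (a', (1:ℂ)) τ := ha.prodMk (hasDerivAt_id τ)
  have h3 := HasFDerivAt.comp_hasDerivAt (f := fun t => (a t, t)) τ h1 h2
  have e : a' * deriv (fun z' => Ψ z' τ) (a τ) + deriv (fun τ' => Ψ (a τ) τ') τ
      = ((ContinuousLinearMap.toSpanSingleton ℂ (deriv (fun z' => Ψ z' τ) (a τ))).coprod
        (ContinuousLinearMap.toSpanSingleton ℂ (deriv (fun τ' => Ψ (a τ) τ') τ))) (a', 1) := by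
    simp
  rw [e]
  exact h3

theorem SepHol.deriv_left {U V : Set ℂ} (hU : IsOpen U) (hV : IsOpen V) {Ψ : ℂ → ℂ → ℂ}
    (h : SepHol U V Ψ) : SepHol U V (fun z τ => deriv (fun z' => Ψ z' τ) z) := by
  refine ⟨fun τ hτ => (h.1 τ hτ).deriv hU, fun z hz => ?_, fun z hz τ hτ =>
    h.cont_deriv hU hV hz hτ⟩
  have hlu : TendstoLocallyUniformlyOn (fun (w : ℂ) τ => (w - z)⁻¹ * (Ψ w τ - Ψ z τ))
      (fun τ => deriv (fun z' => Ψ z' τ) z) (nhdsWithin z {z}ᶜ) V := by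
    rw [Metric.tendstoLocallyUniformlyOn_iff]
    intro ε hε τ hτ
    have h1 := Metric.tendsto_nhds.1 (h.cont_deriv hU hV hz hτ) (ε / 4) (by positivity)
    have h2 := h1.and ((hU.prod hV).mem_nhds (⟨hz, hτ⟩ : (z, τ) ∈ U ×ˢ V))
    obtain ⟨r, hr, hball⟩ := Metric.eventually_nhds_iff_ball.1 h2
    have hball' : ∀ a ∈ ball z r, ∀ b ∈ ball τ r,
        dist (deriv (fun z' => Ψ z' b) a) (deriv (fun z' => Ψ z' τ) z) < ε / 4 ∧ a ∈ U ∧ b ∈ V := by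
      intro a ha b hb
      have := hball (a, b) (by rw [← ball_prod_same]; exact ⟨ha, hb⟩)
      exact this
    refine ⟨ball τ r, mem_nhdsWithin_of_mem_nhds (ball_mem_nhds _ hr), ?_⟩
    filter_upwards [mem_nhdsWithin_of_mem_nhds (ball_mem_nhds z hr), self_mem_nhdsWithin]
      with w hw hwz b hb
    have hwz' : w - z ≠ 0 := sub_ne_zero.2 hwz
    have hzb := hball' z (mem_ball_self hr) b hb
    have key := (convex_ball z r).norm_image_sub_le_of_norm_hasDerivWithin_le
      (f := fun a => Ψ a b - a * deriv (fun z' => Ψ z' b) z)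
      (f' := fun a => deriv (fun z' => Ψ z' b) a - 1 * deriv (fun z' => Ψ z' b) z)
      (C := ε / 2) (x := z) (y := w)
      (fun a ha => by
        have hd : HasDerivAt (fun z' => Ψ z' b) (deriv (fun z' => Ψ z' b) a) a :=
          ((h.1 b hzb.2.2).differentiableAt (hU.mem_nhds (hball' a ha b hb).2.1)).hasDerivAt
        exact (hd.sub ((hasDerivAt_id a).mul_const _)).hasDerivWithinAt)
      (fun a ha => by
        have e1 := (hball' a ha b hb).1
        have e2 := hzb.1
        rw [one_mul, ← dist_eq_norm]
        have := dist_triangle_right (deriv (fun z' => Ψ z' b) a) (deriv (fun z' => Ψ z' b) z)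
          (deriv (fun z' => Ψ z' τ) z)
        linarith) (mem_ball_self hr) hw
    have e : (w - z)⁻¹ * (Ψ w b - Ψ z b) - deriv (fun z' => Ψ z' b) z
        = (w - z)⁻¹ * ((Ψ w b - w * deriv (fun z' => Ψ z' b) z)
          - (Ψ z b - z * deriv (fun z' => Ψ z' b) z)) := by
      field_simp
      ring
    rw [dist_comm, dist_eq_norm, e, norm_mul, norm_inv]
    have hpos : 0 < ‖w - z‖ := norm_pos_iff.2 hwz'
    calc _ ≤ ‖w - z‖⁻¹ * (ε / 2 * ‖w - z‖) := by gcongr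
      _ = ε / 2 := by field_simp
      _ < ε := by linarith
  refine hlu.differentiableOn ?_ hV
  filter_upwards [mem_nhdsWithin_of_mem_nhds (hU.mem_nhds hz)] with w hw
  exact ((h.2.1 w hw).sub (h.2.1 z hz)).const_mul _

theorem SepHol.deriv_right {U V : Set ℂ} (hU : IsOpen U) (hV : IsOpen V) {Ψ : ℂ → ℂ → ℂ}
    (h : SepHol U V Ψ) : SepHol U V (fun z τ => deriv (fun τ' => Ψ z τ') τ) :=
  (h.swap.deriv_left hV hU).swap

theorem SepHol.of_bound {z₀ τ₀ : ℂ} {δ₁ δ₂ C : ℝ} {Φ : ℂ → ℂ → ℂ} (hC : 0 < C)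
    (h1 : ∀ τ ∈ ball τ₀ δ₂, DifferentiableOn ℂ (fun z => Φ z τ) (ball z₀ δ₁))
    (h2 : ∀ z ∈ ball z₀ δ₁, DifferentiableOn ℂ (fun τ => Φ z τ) (ball τ₀ δ₂))
    (h3 : ∀ z ∈ ball z₀ δ₁, ∀ τ ∈ ball τ₀ δ₂, ‖deriv (fun τ' => Φ z τ') τ‖ ≤ C) :
    SepHol (ball z₀ δ₁) (ball τ₀ δ₂) Φ := by
  refine ⟨h1, h2, fun z hz τ hτ => ?_⟩
  rw [ContinuousAt, Metric.tendsto_nhds]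
  intro ε hε
  have hc : ContinuousAt (fun z => Φ z τ) z :=
    (h1 τ hτ).continuousOn.continuousAt (isOpen_ball.mem_nhds hz)
  have hc' := Metric.tendsto_nhds.1 hc (ε / 2) (by positivity)
  rw [nhds_prod_eq]
  refine (Filter.Eventually.prod_mk (hc'.and (isOpen_ball.mem_nhds hz))
    (((isOpen_ball.eventually_mem hτ : ∀ᶠ b in nhds τ, b ∈ ball τ₀ δ₂)).and
      (ball_mem_nhds τ (show 0 < ε / 2 / C by positivity)))).mono ?_
  rintro ⟨a, b⟩ ⟨⟨e1, e2⟩, e3, e4⟩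
  have key := (convex_ball τ₀ δ₂).norm_image_sub_le_of_norm_deriv_le
    (f := fun τ => Φ a τ) (C := C) (x := τ) (y := b)
    (fun x hx => (h2 a e2).differentiableAt (isOpen_ball.mem_nhds hx)) (h3 a e2) hτ e3
  have e5 : C * ‖b - τ‖ < ε / 2 := by
    have : ‖b - τ‖ < ε / 2 / C := by rw [← dist_eq_norm]; exact e4
    rw [lt_div_iff₀ hC] at this
    linarith
  calc dist (Φ a b) (Φ z τ) ≤ dist (Φ a b) (Φ a τ) + dist (Φ a τ) (Φ z τ) :=
        dist_triangle _ _ _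
    _ < ε := by
      rw [dist_eq_norm (Φ a b)]
      simp only at e1 key
      linarith

theorem ode_contract {z₀ τ₀ : ℂ} {δ₁ ε M D : ℝ} {F : ℂ → ℂ → ℂ}
    (hδ : 0 < δ₁) (hM : 0 < M) (hMe : M * ε ≤ δ₁ / 4) (hD : 0 ≤ D)
    (hF : ∀ τ ∈ ball τ₀ ε, DifferentiableOn ℂ (fun z => F z τ) (ball z₀ δ₁))
    (hb : ∀ z ∈ ball z₀ δ₁, ∀ τ ∈ ball τ₀ ε, ‖F z τ‖ ≤ M)
    {l m f g : ℂ → ℂ}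
    (hl : ∀ τ ∈ ball τ₀ ε, l τ ∈ ball z₀ (δ₁ / 2))
    (hm : ∀ τ ∈ ball τ₀ ε, m τ ∈ ball z₀ (δ₁ / 2))
    (hlm : ∀ τ ∈ ball τ₀ ε, ‖l τ - m τ‖ ≤ D)
    (hf : ∀ τ ∈ ball τ₀ ε, HasDerivAt f (F (l τ) τ) τ)
    (hg : ∀ τ ∈ ball τ₀ ε, HasDerivAt g (F (m τ) τ) τ)
    (h0 : f τ₀ = g τ₀) : ∀ τ ∈ ball τ₀ ε, ‖f τ - g τ‖ ≤ D / 2 := by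
  intro τ hτ
  have hε : 0 < ε := pos_of_mem_ball hτ
  have lip : ∀ τ ∈ ball τ₀ ε, ‖F (l τ) τ - F (m τ) τ‖ ≤ M / (δ₁ / 2) * D := by
    intro t ht
    have := (convex_ball z₀ (δ₁ / 2)).norm_image_sub_le_of_norm_deriv_le
      (f := fun z => F z t) (C := M / (δ₁ / 2)) (x := m t) (y := l t)
      (fun x hx => (hF t ht).differentiableAt
        (isOpen_ball.mem_nhds (ball_subset_ball (by linarith) hx)))
      (fun x hx => by
        have hsub : closedBall x (δ₁ / 2) ⊆ ball z₀ δ₁ := by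
          intro y hy
          rw [mem_closedBall] at hy
          rw [mem_ball] at hx ⊢
          linarith [dist_triangle y x z₀]
        refine Complex.norm_deriv_le_of_forall_mem_sphere_norm_le (by positivity) ?_ ?_
        · exact ((hF t ht).mono hsub).diffContOnCl_ball subset_rfl
        · intro z hz
          exact hb z (hsub (sphere_subset_closedBall hz)) t ht)
      (hm t ht) (hl t ht)
    refine this.trans ?_
    gcongr
    exact hlm t ht
  have key := (convex_ball τ₀ ε).norm_image_sub_le_of_norm_hasDerivWithin_le
    (f := fun t => f t - g t) (f' := fun t => F (l t) t - F (m t) t)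
    (C := M / (δ₁ / 2) * D) (x := τ₀) (y := τ)
    (fun t ht => ((hf t ht).sub (hg t ht)).hasDerivWithinAt) lip (mem_ball_self hε) hτ
  simp only [h0, sub_self, sub_zero] at key
  have hτ' : ‖τ - τ₀‖ ≤ ε := by rw [← dist_eq_norm]; exact (mem_ball.1 hτ).le
  calc ‖f τ - g τ‖ ≤ M / (δ₁ / 2) * D * ‖τ - τ₀‖ := key
    _ ≤ M / (δ₁ / 2) * D * ε := by gcongr
    _ = (M * ε) * (2 * D / δ₁) := by field_simp
    _ ≤ δ₁ / 4 * (2 * D / δ₁) := by gcongr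
    _ = D / 2 := by field_simp; norm_num

theorem ode_apriori {z₀ τ₀ : ℂ} {δ₁ ε M : ℝ} {f f' : ℂ → ℂ}
    (hM : 0 < M) (hMe : M * ε ≤ δ₁ / 4)
    (hb : ∀ τ ∈ ball τ₀ ε, ‖f' τ‖ ≤ M)
    (hf : ∀ τ ∈ ball τ₀ ε, HasDerivAt f (f' τ) τ)
    (h0 : f τ₀ = z₀) : ∀ τ ∈ ball τ₀ ε, ‖f τ - z₀‖ ≤ δ₁ / 4 := by
  intro τ hτ
  have hε : 0 < ε := pos_of_mem_ball hτ
  have key := (convex_ball τ₀ ε).norm_image_sub_le_of_norm_hasDerivWithin_le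
    (f := f) (f' := f') (C := M) (x := τ₀) (y := τ)
    (fun t ht => (hf t ht).hasDerivWithinAt) hb (mem_ball_self hε) hτ
  rw [h0] at key
  have hτ' : ‖τ - τ₀‖ ≤ ε := by rw [← dist_eq_norm]; exact (mem_ball.1 hτ).le
  calc _ ≤ M * ‖τ - τ₀‖ := key
    _ ≤ M * ε := by gcongr
    _ ≤ _ := hMe

theorem ode_exists {z₀ τ₀ : ℂ} {δ₁ ε M : ℝ} {F : ℂ → ℂ → ℂ}
    (hδ : 0 < δ₁) (hM : 0 < M) (hε : 0 < ε) (hMe : M * ε ≤ δ₁ / 4)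
    (hF : ∀ τ ∈ ball τ₀ ε, DifferentiableOn ℂ (fun z => F z τ) (ball z₀ δ₁))
    (hcomp : ∀ l : ℂ → ℂ, DifferentiableOn ℂ l (ball τ₀ ε) →
      (∀ τ ∈ ball τ₀ ε, l τ ∈ ball z₀ δ₁) →
      DifferentiableOn ℂ (fun τ => F (l τ) τ) (ball τ₀ ε))
    (hb : ∀ z ∈ ball z₀ δ₁, ∀ τ ∈ ball τ₀ ε, ‖F z τ‖ ≤ M) :
    ∃ l : ℂ → ℂ, l τ₀ = z₀ ∧ ∀ τ ∈ ball τ₀ ε, l τ ∈ ball z₀ δ₁ ∧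
      HasDerivAt l (F (l τ) τ) τ := by
  let S : Set (ℂ → ℂ) := {l | DifferentiableOn ℂ l (ball τ₀ ε) ∧
    ∀ τ ∈ ball τ₀ ε, ‖l τ - z₀‖ ≤ δ₁ / 4}
  have hS1 : ∀ l ∈ S, ∀ τ ∈ ball τ₀ ε, l τ ∈ ball z₀ (δ₁ / 2) := by
    intro l hl τ hτ
    rw [mem_ball, dist_eq_norm]
    linarith [hl.2 τ hτ]
  have hS2 : ∀ l ∈ S, ∀ τ ∈ ball τ₀ ε, l τ ∈ ball z₀ δ₁ := fun l hl τ hτ =>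
    ball_subset_ball (by linarith) (hS1 l hl τ hτ)
  have hT : ∀ l : S, ∃ f : S, f.1 τ₀ = z₀ ∧ ∀ τ ∈ ball τ₀ ε, HasDerivAt f.1 (F (l.1 τ) τ) τ := by
    rintro ⟨l, hl⟩
    obtain ⟨f, hf0, hf⟩ := ((hcomp l hl.1 (hS2 l hl)).isExactOn_ball).with_val_at τ₀ z₀
    refine ⟨⟨f, fun t ht => (hf t ht).differentiableAt.differentiableWithinAt, ?_⟩, hf0, hf⟩
    exact ode_apriori hM hMe (fun τ hτ => hb _ (hS2 l hl τ hτ) τ hτ) hf hf0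
  choose T hT0 hT1 using hT
  have hcon : ∀ (l m : S) (D : ℝ), 0 ≤ D → (∀ τ ∈ ball τ₀ ε, ‖l.1 τ - m.1 τ‖ ≤ D) →
      ∀ τ ∈ ball τ₀ ε, ‖(T l).1 τ - (T m).1 τ‖ ≤ D / 2 := by
    intro l m D hD hlm
    exact ode_contract hδ hM hMe hD hF hb (hS1 l l.2) (hS1 m m.2) hlm (hT1 l) (hT1 m)
      ((hT0 l).trans (hT0 m).symm)
  have hinit : (fun _ => z₀) ∈ S := ⟨differentiableOn_const _, fun τ _ => by simp; positivity⟩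
  let u : ℕ → S := fun n => T^[n] ⟨_, hinit⟩
  have hu : ∀ n, u (n + 1) = T (u n) := fun n => Function.iterate_succ_apply' T n _
  have hstep : ∀ n, ∀ τ ∈ ball τ₀ ε, ‖(u n).1 τ - (u (n + 1)).1 τ‖ ≤ δ₁ / 2 / 2 ^ n := by
    intro n
    induction n with
    | zero =>
      intro τ hτ
      have := (u 1).2.2 τ hτ
      rw [norm_sub_rev]
      simp only [zero_add, pow_zero, div_one]
      have e : (u 0).1 τ = z₀ := rfl
      rw [e]
      linarith
    | succ n ih =>
      intro τ hτ
      rw [hu n, hu (n + 1), ← hu n]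
      have := hcon (u n) (u (n + 1)) _ (by positivity) ih τ hτ
      rw [← hu n] at this
      refine this.trans (le_of_eq ?_)
      rw [pow_succ]; field_simp
  have hlim : ∀ τ, ∃ y, τ ∈ ball τ₀ ε → Filter.Tendsto (fun n => (u n).1 τ) Filter.atTop (nhds y) := by
    intro τ
    by_cases hτ : τ ∈ ball τ₀ ε
    · have : CauchySeq (fun n => (u n).1 τ) :=
        cauchySeq_of_le_geometric_two (C := δ₁) (fun n => by
          rw [dist_eq_norm]; exact hstep n τ hτ)
      obtain ⟨y, hy⟩ := cauchySeq_tendsto_of_complete this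
      exact ⟨y, fun _ => hy⟩
    · exact ⟨0, fun h => absurd h hτ⟩
  choose l hl using hlim
  have hrate : ∀ n, ∀ τ ∈ ball τ₀ ε, ‖(u n).1 τ - l τ‖ ≤ δ₁ / 2 ^ n := by
    intro n τ hτ
    rw [← dist_eq_norm]
    exact dist_le_of_le_geometric_two_of_tendsto (C := δ₁) (fun n => by
          rw [dist_eq_norm]; exact hstep n τ hτ) (hl τ hτ) n
  have hgeo : Filter.Tendsto (fun n : ℕ => δ₁ / 2 ^ n) Filter.atTop (nhds 0) := by
    have := (tendsto_pow_atTop_nhds_zero_of_lt_one (r := (1/2:ℝ)) (by norm_num)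
      (by norm_num)).const_mul δ₁
    simp only [mul_zero] at this
    refine this.congr fun n => ?_
    rw [one_div, inv_pow]; rfl
  have hunif : TendstoUniformlyOn (fun n => (u n).1) l Filter.atTop (ball τ₀ ε) := by
    rw [Metric.tendstoUniformlyOn_iff]
    intro e he
    filter_upwards [hgeo.eventually (gt_mem_nhds he)] with n hn τ hτ
    rw [dist_comm, dist_eq_norm]
    exact (hrate n τ hτ).trans_lt hn
  have hlS : l ∈ S := by
    refine ⟨hunif.tendstoLocallyUniformlyOn.differentiableOn
      (Filter.Eventually.of_forall fun n => (u n).2.1) isOpen_ball, fun τ hτ => ?_⟩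
    exact le_of_tendsto ((hl τ hτ).sub_const z₀).norm
      (Filter.Eventually.of_forall fun n => (u n).2.2 τ hτ)
  have hfix : ∀ τ ∈ ball τ₀ ε, l τ = (T ⟨l, hlS⟩).1 τ := by
    intro τ hτ
    refine tendsto_nhds_unique ((hl τ hτ).comp (Filter.tendsto_add_atTop_nat 1)) ?_
    rw [tendsto_iff_norm_sub_tendsto_zero]
    refine squeeze_zero (fun _ => norm_nonneg _) (fun n => ?_)
      (by simpa using hgeo.div_const 2 : Filter.Tendsto (fun n : ℕ => δ₁ / 2 ^ n / 2)
        Filter.atTop (nhds 0))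
    simp only [Function.comp]
    rw [hu n]
    exact hcon (u n) ⟨l, hlS⟩ _ (by positivity) (hrate n) τ hτ
  refine ⟨l, ?_, fun τ hτ => ⟨hS2 l hlS τ hτ, ?_⟩⟩
  · rw [hfix τ₀ (mem_ball_self hε), hT0]
  · refine (hT1 ⟨l, hlS⟩ τ hτ).congr_of_eventuallyEq ?_
    filter_upwards [isOpen_ball.mem_nhds hτ] with t ht using hfix t ht

theorem ode_unique {z₀ τ₀ : ℂ} {δ₁ ε M : ℝ} {F : ℂ → ℂ → ℂ}
    (hδ : 0 < δ₁) (hM : 0 < M) (hMe : M * ε ≤ δ₁ / 4)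
    (hF : ∀ τ ∈ ball τ₀ ε, DifferentiableOn ℂ (fun z => F z τ) (ball z₀ δ₁))
    (hb : ∀ z ∈ ball z₀ δ₁, ∀ τ ∈ ball τ₀ ε, ‖F z τ‖ ≤ M)
    {l m : ℂ → ℂ} (hl0 : l τ₀ = z₀) (hm0 : m τ₀ = z₀)
    (hl : ∀ τ ∈ ball τ₀ ε, l τ ∈ ball z₀ δ₁ ∧ HasDerivAt l (F (l τ) τ) τ)
    (hm : ∀ τ ∈ ball τ₀ ε, m τ ∈ ball z₀ δ₁ ∧ HasDerivAt m (F (m τ) τ) τ) :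
    Set.EqOn l m (ball τ₀ ε) := by
  have al := ode_apriori hM hMe (fun τ hτ => hb _ (hl τ hτ).1 τ hτ) (fun τ hτ => (hl τ hτ).2) hl0
  have am := ode_apriori hM hMe (fun τ hτ => hb _ (hm τ hτ).1 τ hτ) (fun τ hτ => (hm τ hτ).2) hm0
  have key : ∀ n : ℕ, ∀ τ ∈ ball τ₀ ε, ‖l τ - m τ‖ ≤ δ₁ * (1 / 2) ^ n := by
    intro n
    induction n with
    | zero =>
      intro τ hτ
      have := norm_sub_le_norm_sub_add_norm_sub (l τ) z₀ (m τ)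
      rw [norm_sub_rev z₀] at this
      simp only [pow_zero, mul_one]
      linarith [al τ hτ, am τ hτ]
    | succ n ih =>
      intro τ hτ
      have := ode_contract hδ hM hMe (by positivity) hF hb
        (fun t ht => by rw [mem_ball, dist_eq_norm]; linarith [al t ht])
        (fun t ht => by rw [mem_ball, dist_eq_norm]; linarith [am t ht])
        ih (fun t ht => (hl t ht).2) (fun t ht => (hm t ht).2) (hl0.trans hm0.symm) τ hτ
      refine this.trans (le_of_eq ?_)
      rw [pow_succ]; ring
  intro τ hτ
  have h0 : Filter.Tendsto (fun n : ℕ => δ₁ * (1 / 2 : ℝ) ^ n) Filter.atTop (nhds 0) := by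
    simpa using (tendsto_pow_atTop_nhds_zero_of_lt_one (r := (1/2:ℝ)) (by norm_num)
      (by norm_num)).const_mul δ₁
  have := ge_of_tendsto h0 (Filter.Eventually.of_forall fun n => key n τ hτ)
  exact sub_eq_zero.1 (norm_le_zero_iff.1 this)

/-- Quantitative holomorphic implicit function theorem: if `Φ(z₀,τ₀) = 0`,
`|∂Φ/∂z| ≥ η` and `|∂Φ/∂τ| ≤ C` on `B(z₀,δ₁) × B(τ₀,δ₂)`, then on
`B(τ₀, ε)` with `ε = min(c·δ₁·η/C, δ₂)` there is a unique holomorphic branch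
`λ` of the zero set through `(z₀,τ₀)`, and `λ' = -(∂Φ/∂τ)/(∂Φ/∂z)` along it. -/
theorem holomorphic_implicit_function :
    ∃ c > (0:ℝ), ∀ (z₀ τ₀ : ℂ) (δ₁ δ₂ η C : ℝ) (Φ : ℂ → ℂ → ℂ),
      0 < δ₁ → 0 < δ₂ → 0 < η → 0 < C →
      (∀ τ ∈ ball τ₀ δ₂, DifferentiableOn ℂ (fun z => Φ z τ) (ball z₀ δ₁)) →
      (∀ z ∈ ball z₀ δ₁, DifferentiableOn ℂ (fun τ => Φ z τ) (ball τ₀ δ₂)) →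
      Φ z₀ τ₀ = 0 →
      (∀ z ∈ ball z₀ δ₁, ∀ τ ∈ ball τ₀ δ₂,
        η ≤ ‖deriv (fun z' => Φ z' τ) z‖ ∧
        ‖deriv (fun τ' => Φ z τ') τ‖ ≤ C) →
      ∃ lam : ℂ → ℂ,
        (DifferentiableOn ℂ lam (ball τ₀ (min (c * δ₁ * η / C) δ₂)) ∧
          lam τ₀ = z₀ ∧
          (∀ τ ∈ ball τ₀ (min (c * δ₁ * η / C) δ₂),
            lam τ ∈ ball z₀ δ₁ ∧ Φ (lam τ) τ = 0 ∧
            deriv lam τ =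
              -(deriv (fun τ' => Φ (lam τ) τ') τ) / deriv (fun z' => Φ z' τ) (lam τ))) ∧
        (∀ lam' : ℂ → ℂ,
          DifferentiableOn ℂ lam' (ball τ₀ (min (c * δ₁ * η / C) δ₂)) →
          lam' τ₀ = z₀ →
          (∀ τ ∈ ball τ₀ (min (c * δ₁ * η / C) δ₂),
            lam' τ ∈ ball z₀ δ₁ ∧ Φ (lam' τ) τ = 0) →
          Set.EqOn lam lam' (ball τ₀ (min (c * δ₁ * η / C) δ₂))) := by
  refine ⟨1 / 4, by norm_num, ?_⟩
  intro z₀ τ₀ δ₁ δ₂ η C Φ hδ₁ hδ₂ hη hC h1 h2 h0 hbd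
  set ε := min (1 / 4 * δ₁ * η / C) δ₂ with hεdef
  have hε : 0 < ε := lt_min (by positivity) hδ₂
  have hεδ : ε ≤ δ₂ := min_le_right _ _
  have hsub : ball τ₀ ε ⊆ ball τ₀ δ₂ := ball_subset_ball hεδ
  have hM : 0 < C / η := by positivity
  have hMe : C / η * ε ≤ δ₁ / 4 := by
    calc C / η * ε ≤ C / η * (1 / 4 * δ₁ * η / C) := by gcongr; exact min_le_left _ _
      _ = δ₁ / 4 := by field_simp
  have hU : IsOpen (ball z₀ δ₁) := isOpen_ball
  have hV : IsOpen (ball τ₀ δ₂) := isOpen_ball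
  have hS : SepHol (ball z₀ δ₁) (ball τ₀ δ₂) Φ :=
    SepHol.of_bound hC h1 h2 (fun z hz τ hτ => (hbd z hz τ hτ).2)
  have hS1 := hS.deriv_left hU hV
  have hS2 := hS.deriv_right hU hV
  have hne : ∀ z ∈ ball z₀ δ₁, ∀ τ ∈ ball τ₀ δ₂, deriv (fun z' => Φ z' τ) z ≠ 0 := by
    intro z hz τ hτ
    exact norm_pos_iff.1 (hη.trans_le (hbd z hz τ hτ).1)
  let F : ℂ → ℂ → ℂ := fun z τ =>
    -(deriv (fun τ' => Φ z τ') τ) / deriv (fun z' => Φ z' τ) z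
  have hF : ∀ τ ∈ ball τ₀ ε, DifferentiableOn ℂ (fun z => F z τ) (ball z₀ δ₁) := by
    intro τ hτ
    exact (hS2.1 τ (hsub hτ)).neg.div (hS1.1 τ (hsub hτ)) (fun z hz => hne z hz τ (hsub hτ))
  have hb : ∀ z ∈ ball z₀ δ₁, ∀ τ ∈ ball τ₀ ε, ‖F z τ‖ ≤ C / η := by
    intro z hz τ hτ
    have := hbd z hz τ (hsub hτ)
    simp only [F]
    rw [norm_div, norm_neg]
    exact div_le_div₀ hC.le this.2 hη this.1
  have hcomp : ∀ l : ℂ → ℂ, DifferentiableOn ℂ l (ball τ₀ ε) →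
      (∀ τ ∈ ball τ₀ ε, l τ ∈ ball z₀ δ₁) →
      DifferentiableOn ℂ (fun τ => F (l τ) τ) (ball τ₀ ε) := by
    intro l hl hlm τ hτ
    have hd := (hl.differentiableAt (isOpen_ball.mem_nhds hτ)).hasDerivAt
    have e1 := (hS1.chain hU hV (hlm τ hτ) (hsub hτ) hd).differentiableAt
    have e2 := (hS2.chain hU hV (hlm τ hτ) (hsub hτ) hd).differentiableAt
    exact (e2.neg.div e1 (hne _ (hlm τ hτ) τ (hsub hτ))).differentiableWithinAt
  obtain ⟨l, hl0, hl⟩ := ode_exists hδ₁ hM hε hMe hF hcomp hb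
  have hld : DifferentiableOn ℂ l (ball τ₀ ε) := fun τ hτ =>
    (hl τ hτ).2.differentiableAt.differentiableWithinAt
  have hzero : ∀ τ ∈ ball τ₀ ε, HasDerivAt (fun t => Φ (l t) t) 0 τ := by
    intro τ hτ
    convert hS.chain hU hV (hl τ hτ).1 (hsub hτ) (hl τ hτ).2 using 1
    have := hne _ (hl τ hτ).1 τ (hsub hτ)
    simp only [F]
    rw [div_mul_cancel₀ _ this]
    ring
  refine ⟨l, ⟨hld, hl0, fun τ hτ => ⟨(hl τ hτ).1, ?_, (hl τ hτ).2.deriv⟩⟩, ?_⟩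
  · have key := (convex_ball τ₀ ε).norm_image_sub_le_of_norm_hasDerivWithin_le
      (f := fun t => Φ (l t) t) (f' := fun _ => 0) (C := 0) (x := τ₀) (y := τ)
      (fun t ht => (hzero t ht).hasDerivWithinAt) (fun _ _ => by simp) (mem_ball_self hε) hτ
    simpa [hl0, h0] using key
  · intro m hmd hm0 hm
    refine ode_unique hδ₁ hM hMe hF hb hl0 hm0 hl (fun τ hτ => ⟨(hm τ hτ).1, ?_⟩)
    have hd := (hmd.differentiableAt (isOpen_ball.mem_nhds hτ)).hasDerivAt
    have e1 := hS.chain hU hV (hm τ hτ).1 (hsub hτ) hd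
    have e2 : HasDerivAt (fun t => Φ (m t) t) 0 τ := by
      refine (hasDerivAt_const τ (0:ℂ)).congr_of_eventuallyEq ?_
      filter_upwards [isOpen_ball.mem_nhds hτ] with t ht using (hm t ht).2
    have e3 := e1.unique e2
    have hn := hne _ (hm τ hτ).1 τ (hsub hτ)
    have e4 : F (m τ) τ = deriv m τ := by
      simp only [F]
      rw [div_eq_iff hn]
      linear_combination -e3
    rw [e4]
    exact hd
end

section
/- There exists an absolute constant δ > 0 such that for every t ∈ [0,1] and every integer m ≥ 0 the following hold, where φ̃_k(z) := 1 + e^{-i 3^{-k} z} + e^{-i t 3^{-k} z} for 0 ≤ k ≤ m: (i) for every z ∈ ℂ with |Im z| ≤ δ there exists k_0 ∈ {0,1,…,m} such that ∏_{0 ≤ k ≤ m, k ≠ k_0} |φ̃_k(z)| ≥ 3^{-m}; (ii) for every x_0 ∈ ℝ, there is at most one index k_0 ∈ {0,1,…,m} for which there exists a point z_0 in the rectangle [x_0 − δ, x_0 + δ] × [−δ, δ] ⊆ ℂ with |φ̃_{k_0}(z_0)| < 3^{-m} (uniqueness of the critical index). -/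
/-- `φ̃_k(z) = 1 + e^{-i 3^{-k} z} + e^{-i t 3^{-k} z}`. -/
noncomputable def phiTildeK (t : ℝ) (k : ℕ) (z : ℂ) : ℂ :=
  1 + Complex.exp (-Complex.I * (3 : ℂ) ^ (-(k : ℤ)) * z)
    + Complex.exp (-Complex.I * (t : ℂ) * (3 : ℂ) ^ (-(k : ℤ)) * z)

lemma at_one_le_prod (s : Finset ℕ) (f : ℕ → ℝ) (h : ∀ i ∈ s, 1 ≤ f i) : 1 ≤ ∏ i ∈ s, f i := by
  have := Finset.prod_le_prod (s := s) (f := fun _ => (1 : ℝ)) (g := f)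
    (fun _ _ => zero_le_one) h
  simpa using this

lemma at_normsq (a b : ℂ) (ha : ‖a‖ = 1) (hb : ‖b‖ = 1) :
    9 - ‖1 + a + b‖ ^ 2 = ‖a - 1‖ ^ 2 + ‖b - 1‖ ^ 2 + ‖a - b‖ ^ 2 := by
  have ha' : ‖a‖ ^ 2 = 1 := by rw [ha]; norm_num
  have hb' : ‖b‖ ^ 2 = 1 := by rw [hb]; norm_num
  simp only [Complex.sq_norm, Complex.normSq_apply, Complex.add_re, Complex.add_im,
    Complex.sub_re, Complex.sub_im, Complex.one_re, Complex.one_im] at *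
  linear_combination (-3) * ha' - 3 * hb'

lemma at_step (a b : ℂ) (ha : ‖a‖ = 1) (hb : ‖b‖ = 1) :
    9 - ‖1 + a ^ 3 + b ^ 3‖ ^ 2 ≤ 9 * (9 - ‖1 + a + b‖ ^ 2) := by
  rw [at_normsq a b ha hb, at_normsq (a ^ 3) (b ^ 3) (by simp [ha]) (by simp [hb])]
  have key : ∀ u v : ℂ, ‖u‖ = 1 → ‖v‖ = 1 → ‖u ^ 3 - v ^ 3‖ ^ 2 ≤ 9 * ‖u - v‖ ^ 2 := by
    intro u v hu hv
    have h1 : u ^ 3 - v ^ 3 = (u ^ 2 + u * v + v ^ 2) * (u - v) := by ring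
    have h2 : ‖u ^ 2 + u * v + v ^ 2‖ ≤ 3 := by
      refine (norm_add₃_le).trans ?_
      simp [hu, hv]; norm_num
    rw [h1, norm_mul, mul_pow]
    have h3 : ‖u ^ 2 + u * v + v ^ 2‖ ^ 2 ≤ 3 ^ 2 := by gcongr
    nlinarith [sq_nonneg ‖u - v‖]
  have k1 := key a 1 ha (by simp)
  have k2 := key b 1 hb (by simp)
  have k3 := key a b ha hb
  rw [one_pow] at k1 k2
  linarith

lemma at_first (a b : ℂ) (ha : ‖a‖ = 1) (hb : ‖b‖ = 1) :
    3 - ‖1 + a + b‖ ^ 2 * (‖1 + a + b‖ + 3) ≤ ‖1 + a ^ 3 + b ^ 3‖ := by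
  have ca : a * (starRingEnd ℂ) a = 1 := by rw [Complex.mul_conj']; simp [ha]
  have cb : b * (starRingEnd ℂ) b = 1 := by rw [Complex.mul_conj']; simp [hb]
  have h1 : ‖a + b + a * b‖ = ‖1 + a + b‖ := by
    have : a + b + a * b = a * b * (starRingEnd ℂ) (1 + a + b) := by
      simp only [map_add, map_one]
      linear_combination (-b) * ca - a * cb
    rw [this, norm_mul, norm_mul, Complex.norm_conj, ha, hb]; ring
  set S := 1 + a + b with hS
  have h2 : 3 * (a * b) = (1 + a ^ 3 + b ^ 3) - S * (S ^ 2 - 3 * (a + b + a * b)) := by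
    rw [hS]; ring
  have h3 : ‖3 * (a * b)‖ = 3 := by simp [ha, hb]
  have h4 : ‖S ^ 2 - 3 * (a + b + a * b)‖ ≤ ‖S‖ ^ 2 + 3 * ‖S‖ := by
    refine (norm_sub_le _ _).trans ?_
    rw [norm_mul, h1]; simp
  have h5 := norm_sub_le (1 + a ^ 3 + b ^ 3) (S * (S ^ 2 - 3 * (a + b + a * b)))
  rw [← h2, h3, norm_mul] at h5
  nlinarith [mul_le_mul_of_nonneg_left h4 (norm_nonneg S)]

lemma at_iter (a b : ℂ) (ha : ‖a‖ = 1) (hb : ‖b‖ = 1) (j : ℕ) :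
    9 - ‖1 + a ^ (3 ^ (j + 1)) + b ^ (3 ^ (j + 1))‖ ^ 2
      ≤ 9 ^ j * (9 - ‖1 + a ^ 3 + b ^ 3‖ ^ 2) := by
  induction j with
  | zero => simp
  | succ j ih =>
    have := at_step (a ^ (3 ^ (j + 1))) (b ^ (3 ^ (j + 1))) (by simp [ha]) (by simp [hb])
    rw [← pow_mul, ← pow_mul, ← pow_succ] at this
    rw [pow_succ (9 : ℝ) j]
    linarith

lemma at_B (a b : ℂ) (ha : ‖a‖ = 1) (hb : ‖b‖ = 1) (d j : ℕ) (hj : 1 ≤ j) (hjd : j ≤ d)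
    (h : ‖1 + a + b‖ ≤ 1.1 * (1 / 3 : ℝ) ^ d) :
    2 ≤ ‖1 + a ^ (3 ^ j) + b ^ (3 ^ j)‖ := by
  obtain ⟨i, rfl⟩ : ∃ i, j = i + 1 := ⟨j - 1, by omega⟩
  have h1 := at_iter a b ha hb i
  have h2 := at_first a b ha hb
  have hq : (1 / 3 : ℝ) ^ d ≤ (1 / 3 : ℝ) ^ (i + 1) :=
    pow_le_pow_of_le_one (by norm_num) (by norm_num) hjd
  have hr : (1 / 3 : ℝ) ^ i ≤ 1 := pow_le_one₀ (by norm_num) (by norm_num)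
  have hr0 : (0 : ℝ) < (1 / 3 : ℝ) ^ i := by positivity
  have h9 : (9 : ℝ) ^ i * ((1 / 3 : ℝ) ^ i) ^ 2 = 1 := by
    rw [← pow_mul, mul_comm i 2, pow_mul, ← mul_pow]; norm_num
  rw [pow_succ] at hq
  set r := (1 / 3 : ℝ) ^ i
  set s := ‖1 + a + b‖
  set P := ‖1 + a ^ 3 + b ^ 3‖
  have hs0 : 0 ≤ s := norm_nonneg _
  have hs : s ≤ 0.37 * r := by linarith
  have hs1 : s ≤ 0.37 := by linarith
  have hss : s ^ 2 ≤ 0.1369 * r ^ 2 := by nlinarith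
  have hss1 : s ^ 2 ≤ 0.1369 := by nlinarith
  have h3 : s ^ 2 * (s + 3) ≤ 3.37 * s ^ 2 := by nlinarith [sq_nonneg s]
  have h4 : 3 - 3.37 * s ^ 2 ≤ P := by linarith
  have h5 : (3 - 3.37 * s ^ 2) ^ 2 ≤ P ^ 2 := by
    apply pow_le_pow_left₀ _ h4
    linarith
  have h6 : 9 - P ^ 2 ≤ 3 * r ^ 2 := by nlinarith [sq_nonneg (s ^ 2)]
  have h7 : (9 : ℝ) ^ i * (9 - P ^ 2) ≤ 9 ^ i * (3 * r ^ 2) := by gcongr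
  by_contra hc
  push Not at hc
  have h8 := norm_nonneg (1 + a ^ (3 ^ (i + 1)) + b ^ (3 ^ (i + 1)))
  nlinarith

lemma at_real (t x : ℝ) (k d j : ℕ) (hj : 1 ≤ j) (hjd : j ≤ d) (hjk : j ≤ k)
    (h : ‖phiTildeK t k x‖ ≤ 1.1 * (1 / 3 : ℝ) ^ d) : 2 ≤ ‖phiTildeK t (k - j) x‖ := by
  have e3 : (3 : ℂ) ^ (-((k - j : ℕ) : ℤ)) = (3 : ℂ) ^ j * (3 : ℂ) ^ (-(k : ℤ)) := by
    rw [← zpow_natCast (3 : ℂ) j, ← zpow_add₀ (by norm_num)]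
    congr 1; omega
  have r3 : (3 : ℂ) ^ (-(k : ℤ)) = (((3 : ℝ) ^ (-(k : ℤ)) : ℝ) : ℂ) := by push_cast; rfl
  have := at_B (Complex.exp (-Complex.I * (3 : ℂ) ^ (-(k : ℤ)) * x))
    (Complex.exp (-Complex.I * (t : ℂ) * (3 : ℂ) ^ (-(k : ℤ)) * x))
    (by
      rw [r3, show -Complex.I * (((3 : ℝ) ^ (-(k : ℤ)) : ℝ) : ℂ) * x
        = ((-((3 : ℝ) ^ (-(k : ℤ)) * x) : ℝ) : ℂ) * Complex.I by push_cast; ring]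
      exact Complex.norm_exp_ofReal_mul_I _)
    (by
      rw [r3, show -Complex.I * (t : ℂ) * (((3 : ℝ) ^ (-(k : ℤ)) : ℝ) : ℂ) * x
        = ((-(t * (3 : ℝ) ^ (-(k : ℤ)) * x) : ℝ) : ℂ) * Complex.I by push_cast; ring]
      exact Complex.norm_exp_ofReal_mul_I _) d j hj hjd h
  rw [← Complex.exp_nat_mul, ← Complex.exp_nat_mul] at this
  unfold phiTildeK
  rw [e3]
  convert this using 4
  · push_cast; ring_nf
  · push_cast; ring_nf

lemma at_exp (c : ℝ) (hc0 : 0 ≤ c) (hc : c ≤ 1) (z : ℂ) (x : ℝ) (h : ‖z - x‖ ≤ 0.02) :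
    ‖Complex.exp (-Complex.I * c * z) - Complex.exp (-Complex.I * c * x)‖ ≤ 0.04 * c := by
  have e : Complex.exp (-Complex.I * c * z) - Complex.exp (-Complex.I * c * x)
      = Complex.exp (((-(c * x) : ℝ) : ℂ) * Complex.I)
        * (Complex.exp (-Complex.I * c * (z - x)) - 1) := by
    rw [mul_sub, ← Complex.exp_add, mul_one]
    congr 2 <;> (push_cast; ring)
  rw [e, norm_mul, Complex.norm_exp_ofReal_mul_I, one_mul]
  have hn : ‖-Complex.I * c * (z - x)‖ = c * ‖z - x‖ := by
    simp [abs_of_nonneg hc0]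
  have h0 := norm_nonneg (z - x)
  refine (Complex.norm_exp_sub_one_le (by rw [hn]; nlinarith)).trans ?_
  rw [hn]; nlinarith

lemma at_C (t : ℝ) (ht : t ∈ Set.Icc (0 : ℝ) 1) (k : ℕ) (z : ℂ) (x : ℝ) (h : ‖z - x‖ ≤ 0.02) :
    ‖phiTildeK t k z - phiTildeK t k x‖ ≤ 0.1 * (1 / 3 : ℝ) ^ k := by
  have hc : (3 : ℂ) ^ (-(k : ℤ)) = (((1 / 3 : ℝ) ^ k : ℝ) : ℂ) := by
    rw [zpow_neg, zpow_natCast]; push_cast; rw [one_div, inv_pow]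
  have hr : (1 / 3 : ℝ) ^ k ≤ 1 := pow_le_one₀ (by norm_num) (by norm_num)
  have hr0 : (0 : ℝ) < (1 / 3 : ℝ) ^ k := by positivity
  obtain ⟨ht0, ht1⟩ := ht
  unfold phiTildeK
  rw [hc]
  set c := (1 / 3 : ℝ) ^ k
  have h1 := at_exp c hr0.le hr z x h
  have h2 := at_exp (t * c) (by positivity) (by nlinarith) z x h
  have e : -Complex.I * ((t * c : ℝ) : ℂ) = -Complex.I * t * c := by push_cast; ring
  rw [e] at h2
  rw [show ∀ p q r s : ℂ, 1 + p + q - (1 + r + s) = (p - r) + (q - s) by intros; ring]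
  refine (norm_add_le _ _).trans ?_
  nlinarith

/-- The combinatorial tiling argument. -/
lemma at_tile (f : ℕ → ℝ) (hf : ∀ k, 0 ≤ f k)
    (H : ∀ k d j, d ≤ k → 1 ≤ j → j ≤ d → f k ≤ (1 / 3 : ℝ) ^ d → 1 ≤ f (k - j)) (n : ℕ) :
    (1 / 3 : ℝ) ^ n ≤ ∏ k ∈ Finset.range n, f k ∨
    ∃ k₀ < n, (1 / 3 : ℝ) ^ (n - 1) ≤ ∏ k ∈ (Finset.range n).erase k₀, f k := by
  induction n using Nat.strong_induction_on with
  | _ n ih =>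
  rcases n with _ | n
  · left; simp
  by_cases h0 : f n ≤ (1 / 3 : ℝ) ^ n
  · right
    refine ⟨n, by omega, ?_⟩
    rw [Finset.range_add_one, Finset.erase_insert (by simp)]
    refine (pow_le_one₀ (by norm_num) (by norm_num)).trans ?_
    apply at_one_le_prod
    intro i hi
    have hi := Finset.mem_range.1 hi
    have := H n n (n - i) le_rfl (by omega) (by omega) h0
    rwa [show n - (n - i) = i by omega] at this
  push Not at h0
  -- block of length d + 1
  obtain ⟨d, hd, hb⟩ : ∃ d ≤ n, (1 / 3 : ℝ) ^ (d + 1) ≤ ∏ k ∈ Finset.Ico (n - d) (n + 1), f k := by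
    by_cases h1 : 1 < f n
    · refine ⟨0, by omega, ?_⟩
      simp; linarith
    push Not at h1
    obtain ⟨d, hd1, hd2⟩ := exists_nat_pow_near_of_lt_one (y := (1 / 3 : ℝ))
      (lt_trans (by positivity) h0) h1 (by norm_num) (by norm_num)
    have hdn : d < n := by
      by_contra hc
      push Not at hc
      have := pow_le_pow_of_le_one (a := (1 / 3 : ℝ)) (by norm_num) (by norm_num) hc
      linarith
    refine ⟨d, hdn.le, ?_⟩
    rw [Finset.prod_Ico_succ_top (by omega)]
    have : 1 ≤ ∏ k ∈ Finset.Ico (n - d) n, f k := by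
      apply at_one_le_prod
      intro i hi
      have hi := Finset.mem_Ico.1 hi
      have := H n d (n - i) hdn.le (by omega) (by omega) hd2
      rwa [show n - (n - i) = i by omega] at this
    nlinarith [hf n]
  have hsplit : Finset.range (n + 1) = Finset.range (n - d) ∪ Finset.Ico (n - d) (n + 1) := by
    ext i; simp; omega
  have hpos : ∀ m : ℕ, (0 : ℝ) ≤ (1 / 3 : ℝ) ^ m := fun m => by positivity
  rcases ih (n - d) (by omega) with h | ⟨k₀, hk, h⟩
  · left
    rw [← Finset.prod_range_mul_prod_Ico f (show n - d ≤ n + 1 by omega),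
      show n + 1 = (n - d) + (d + 1) by omega, pow_add]
    rw [show n - d + (d + 1) = n + 1 by omega]
    exact mul_le_mul h hb (hpos _) ((hpos _).trans h)
  · right
    refine ⟨k₀, by omega, ?_⟩
    have e : (Finset.range (n + 1)).erase k₀
        = (Finset.range (n - d)).erase k₀ ∪ Finset.Ico (n - d) (n + 1) := by
      ext i; simp; omega
    rw [e, Finset.prod_union]
    · rw [show n + 1 - 1 = (n - d - 1) + (d + 1) by omega, pow_add]
      exact mul_le_mul h hb (hpos _) ((hpos _).trans h)
    · rw [Finset.disjoint_left]
      intro i hi hi'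
      simp at hi hi'
      omega

lemma at_drop (f : ℕ → ℝ) (hf : ∀ k, 0 ≤ f k)
    (H : ∀ k d j, d ≤ k → 1 ≤ j → j ≤ d → f k ≤ (1 / 3 : ℝ) ^ d → 1 ≤ f (k - j)) (m : ℕ) :
    ∃ k₀ ≤ m, (1 / 3 : ℝ) ^ m ≤ ∏ k ∈ (Finset.range (m + 1)).erase k₀, f k := by
  rcases at_tile f hf H (m + 1) with h | ⟨k₀, hk, h⟩
  · by_cases hc : ∃ k ≤ m, f k ≤ 1 / 3
    · obtain ⟨k, hk, hk'⟩ := hc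
      refine ⟨k, hk, ?_⟩
      rw [← Finset.mul_prod_erase (Finset.range (m + 1)) f (a := k) (by simp; omega), pow_succ] at h
      have : 0 ≤ ∏ k ∈ (Finset.range (m + 1)).erase k, f k := Finset.prod_nonneg fun i _ => hf i
      nlinarith
    · push Not at hc
      refine ⟨m, le_rfl, ?_⟩
      rw [Finset.range_add_one, Finset.erase_insert (by simp)]
      calc (1 / 3 : ℝ) ^ m = ∏ k ∈ Finset.range m, (1 / 3 : ℝ) := by simp
        _ ≤ _ := Finset.prod_le_prod (fun _ _ => by norm_num)
          fun i hi => (hc i (Finset.mem_range.1 hi).le).le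
  · exact ⟨k₀, by omega, by simpa using h⟩

/-- Analytic tiling: (i) near the real axis, dropping one suitable factor of
`∏_{k=0}^m φ̃_k` leaves a product of modulus at least `3^{-m}`; (ii) in each
`δ`-rectangle at most one index `k₀` can have `|φ̃_{k₀}| < 3^{-m}` somewhere. -/
theorem analytic_tiling :
    ∃ δ > (0:ℝ), ∀ t ∈ Set.Icc (0:ℝ) 1, ∀ m : ℕ,
      (∀ z : ℂ, |z.im| ≤ δ →
        ∃ k₀ ≤ m, (3:ℝ) ^ (-(m : ℤ)) ≤
          ∏ k ∈ (Finset.range (m + 1)).erase k₀, ‖phiTildeK t k z‖) ∧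
      (∀ x₀ : ℝ, ∀ k₀ k₁ : ℕ, k₀ ≤ m → k₁ ≤ m →
        (∃ z₀ : ℂ, |z₀.re - x₀| ≤ δ ∧ |z₀.im| ≤ δ ∧
          ‖phiTildeK t k₀ z₀‖ < (3:ℝ) ^ (-(m : ℤ))) →
        (∃ z₁ : ℂ, |z₁.re - x₀| ≤ δ ∧ |z₁.im| ≤ δ ∧
          ‖phiTildeK t k₁ z₁‖ < (3:ℝ) ^ (-(m : ℤ))) →
        k₀ = k₁) := by
  refine ⟨0.01, by norm_num, fun t ht m => ?_⟩
  have h3 : (3 : ℝ) ^ (-(m : ℤ)) = (1 / 3 : ℝ) ^ m := by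
    rw [zpow_neg, zpow_natCast, one_div, inv_pow]
  rw [h3]
  have pw : ∀ p q : ℕ, p ≤ q → (1 / 3 : ℝ) ^ q ≤ (1 / 3 : ℝ) ^ p := fun p q h =>
    pow_le_pow_of_le_one (by norm_num) (by norm_num) h
  constructor
  · intro z hz
    apply at_drop (fun k => ‖phiTildeK t k z‖) (fun k => norm_nonneg _)
    intro k d j hdk hj hjd h
    have hzx : ‖z - (z.re : ℂ)‖ ≤ 0.02 := by
      have : z - (z.re : ℂ) = z.im * Complex.I := by
        apply Complex.ext <;> simp
      rw [this]; simp
      linarith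
    have c1 := at_C t ht k z z.re hzx
    have c2 := at_C t ht (k - j) z z.re hzx
    have n1 := norm_sub_norm_le (phiTildeK t k z.re) (phiTildeK t k z)
    rw [norm_sub_rev] at n1
    have n2 := norm_sub_norm_le (phiTildeK t (k - j) z.re) (phiTildeK t (k - j) z)
    rw [norm_sub_rev] at n2
    have := at_real t z.re k d j hj hjd (by omega) (by
      have := pw d k hdk
      linarith)
    have := pw 0 (k - j) (by omega)
    linarith
  · intro x₀
    have key : ∀ k₀ k₁ : ℕ, k₀ ≤ m → k₁ < k₀ →
        (∃ z₀ : ℂ, |z₀.re - x₀| ≤ 0.01 ∧ |z₀.im| ≤ 0.01 ∧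
          ‖phiTildeK t k₀ z₀‖ < (1 / 3 : ℝ) ^ m) →
        (∃ z₁ : ℂ, |z₁.re - x₀| ≤ 0.01 ∧ |z₁.im| ≤ 0.01 ∧
          ‖phiTildeK t k₁ z₁‖ < (1 / 3 : ℝ) ^ m) → False := by
      rintro k₀ k₁ hk hlt ⟨z, hz1, hz2, hz3⟩ ⟨w, hw1, hw2, hw3⟩
      have hn : ∀ z : ℂ, |z.re - x₀| ≤ 0.01 → |z.im| ≤ 0.01 → ‖z - (x₀ : ℂ)‖ ≤ 0.02 := by
        intro z h1 h2
        refine (Complex.norm_le_abs_re_add_abs_im _).trans ?_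
        simp
        linarith
      have c1 := at_C t ht k₀ z x₀ (hn z hz1 hz2)
      have c2 := at_C t ht k₁ w x₀ (hn w hw1 hw2)
      have n1 := norm_sub_norm_le (phiTildeK t k₀ x₀) (phiTildeK t k₀ z)
      rw [norm_sub_rev] at n1
      have n2 := norm_sub_norm_le (phiTildeK t k₁ x₀) (phiTildeK t k₁ w)
      rw [norm_sub_rev] at n2
      have := at_real t x₀ k₀ k₀ (k₀ - k₁) (by omega) (by omega) (by omega) (by
        have := pw k₀ m hk
        linarith)
      rw [show k₀ - (k₀ - k₁) = k₁ by omega] at this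
      have := pw 0 k₁ (by omega)
      have := pw 0 m (by omega)
      linarith
    intro k₀ k₁ hk₀ hk₁ h₀ h₁
    rcases lt_trichotomy k₀ k₁ with h | h | h
    · exact (key k₁ k₀ hk₁ h h₁ h₀).elim
    · exact h
    · exact (key k₀ k₁ hk₀ h h₀ h₁).elim
end

section
/- There exists an absolute constant c > 0 such that: for every integer k' ≥ 0, all real numbers y_1, y_2 with |y_1| ≤ c·3^{-k'} and |y_2| ≤ c·3^{-k'}, and all w_1, w_2 ∈ ℂ satisfying |w_1| = e^{y_1}, |w_2| = e^{y_2}, and 1 + w_1 + w_2 = 0, one has, for every integer k with 1 ≤ k ≤ k' + 1: Re(1 + w_1^{3^k} + w_2^{3^k}) ≥ 2 (in particular |1 + w_1^{3^k} + w_2^{3^k}| ≥ 2). -/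
/-- Powers of a number near `1` stay near `1`. -/
theorem pow_sub_one_bound (z : ℂ) (n : ℕ) :
    ‖z ^ n - 1‖ ≤ Real.exp (n * ‖z - 1‖) - 1 := by
  induction n with
  | zero => simp
  | succ n ih =>
    have h1 : z ^ (n + 1) - 1 = z * (z ^ n - 1) + (z - 1) := by ring
    have h2 : ‖z‖ ≤ 1 + ‖z - 1‖ := by
      have := norm_add_le (1 : ℂ) (z - 1)
      simpa using this
    have h3 : Real.exp (((n + 1 : ℕ) : ℝ) * ‖z - 1‖)
        = Real.exp (n * ‖z - 1‖) * Real.exp ‖z - 1‖ := by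
      rw [← Real.exp_add]; congr 1; push_cast; ring
    have h4 := Real.add_one_le_exp ‖z - 1‖
    have h5 := Real.exp_pos (n * ‖z - 1‖)
    rw [h1, h3]
    have h6 : ‖z * (z ^ n - 1) + (z - 1)‖ ≤ ‖z‖ * ‖z ^ n - 1‖ + ‖z - 1‖ := by
      refine (norm_add_le _ _).trans ?_
      rw [norm_mul]
    have h7 : ‖z‖ * ‖z ^ n - 1‖ ≤ (1 + ‖z - 1‖) * (Real.exp (n * ‖z - 1‖) - 1) :=
      mul_le_mul h2 ih (norm_nonneg _) (by positivity)
    nlinarith [mul_le_mul_of_nonneg_left h4 h5.le]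

/-- The cube of `w` is within `75 t` of `1`. -/
theorem cube_near_one (t y₁ y₂ : ℝ) (ht : t ≤ 1 / 300) (h1 : |y₁| ≤ t) (h2 : |y₂| ≤ t)
    (w v : ℂ) (hw : ‖w‖ = Real.exp y₁) (hv : ‖v‖ = Real.exp y₂) (h : 1 + w + v = 0) :
    ‖w ^ 3 - 1‖ ≤ 75 * t := by
  have ht0 : 0 ≤ t := (abs_nonneg _).trans h1
  have key : ∀ y : ℝ, |y| ≤ t → |Real.exp y ^ 2 - 1| ≤ 4 * t := by
    intro y hy
    have e : Real.exp y ^ 2 = Real.exp (2 * y) := by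
      rw [← Real.exp_nat_mul]; norm_num
    have a : |2 * y| = 2 * |y| := by rw [abs_mul]; norm_num
    rw [e]
    have := Real.abs_exp_sub_one_le (x := 2 * y) (by rw [a]; linarith)
    rw [a] at this
    linarith
  have k1 := key y₁ h1
  have k2 := key y₂ h2
  rw [← hw, Complex.sq_norm, Complex.normSq_apply] at k1
  have hv' : v = -1 - w := by linear_combination h
  rw [← hv, Complex.sq_norm, Complex.normSq_apply, hv'] at k2
  simp only [Complex.sub_re, Complex.sub_im, Complex.neg_re, Complex.neg_im, Complex.one_re,
    Complex.one_im] at k2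
  have hwn : ‖w‖ ≤ 2 := by
    have := Complex.sq_norm w
    rw [Complex.normSq_apply] at this
    have := (abs_le.1 k1).2
    nlinarith [norm_nonneg w]
  have hb : |w.im| ≤ 2 := (Complex.abs_im_le_norm w).trans hwn
  obtain ⟨k1a, k1b⟩ := abs_le.1 k1
  obtain ⟨k2a, k2b⟩ := abs_le.1 k2
  have hd : |1 + 2 * w.re| ≤ 8 * t := by
    rw [abs_le]; constructor <;> nlinarith
  obtain ⟨d1, d2⟩ := abs_le.1 hd
  have hd2 : (1 + 2 * w.re) ^ 2 ≤ t := by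
    have : (1 + 2 * w.re) ^ 2 ≤ (8 * t) ^ 2 := sq_le_sq' (by linarith) d2
    nlinarith
  have hre : |(w ^ 2 + w + 1).re| ≤ 9 * t := by
    have e : (w ^ 2 + w + 1).re = -(w.re * w.re + w.im * w.im - 1)
        - (1 + 2 * w.re) / 2 + (1 + 2 * w.re) ^ 2 / 2 := by
      simp [pow_two]; ring
    rw [e, abs_le]
    constructor <;> nlinarith [sq_nonneg (1 + 2 * w.re)]
  have him : |(w ^ 2 + w + 1).im| ≤ 16 * t := by
    have e : (w ^ 2 + w + 1).im = w.im * (1 + 2 * w.re) := by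
      simp [pow_two]; ring
    rw [e, abs_mul]
    have := mul_le_mul hb hd (abs_nonneg _) (by norm_num)
    linarith
  have hq : ‖w ^ 2 + w + 1‖ ≤ 25 * t := by
    have := Complex.norm_le_abs_re_add_abs_im (w ^ 2 + w + 1)
    linarith
  have hw1 : ‖w - 1‖ ≤ 3 := by
    have := norm_sub_le w 1
    rw [norm_one] at this
    linarith
  have e : w ^ 3 - 1 = (w - 1) * (w ^ 2 + w + 1) := by ring
  rw [e, norm_mul]
  have := mul_le_mul hw1 hq (norm_nonneg _) (by norm_num)
  linarith

/-- High powers stay near `1`. -/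
theorem high_pow_near_one (k' k : ℕ) (w : ℂ) (hk : 1 ≤ k) (hk' : k ≤ k' + 1)
    (hw : ‖w ^ 3 - 1‖ ≤ 75 * (1 / 300 * (3:ℝ) ^ (-(k' : ℤ)))) :
    1 / 2 ≤ (w ^ (3 ^ k)).re := by
  obtain ⟨m, rfl⟩ : ∃ m, k = m + 1 := ⟨k - 1, by omega⟩
  have hm : m ≤ k' := by omega
  have e : w ^ (3 ^ (m + 1)) = (w ^ 3) ^ (3 ^ m) := by
    rw [← pow_mul, pow_succ, mul_comm]
  have hp := pow_sub_one_bound (w ^ 3) (3 ^ m)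
  have h3 : ((3 ^ m : ℕ) : ℝ) ≤ (3:ℝ) ^ k' := by
    push_cast
    exact pow_le_pow_right₀ (by norm_num) hm
  set s := ((3 ^ m : ℕ) : ℝ) * ‖w ^ 3 - 1‖ with hs
  have hs0 : 0 ≤ s := by positivity
  have hs1 : s ≤ 1 / 4 := by
    have := mul_le_mul h3 hw (norm_nonneg _) (by positivity)
    rw [← hs] at this
    refine this.trans (le_of_eq ?_)
    rw [zpow_neg, zpow_natCast]
    field_simp
    norm_num
  have hexp := Real.abs_exp_sub_one_le (x := s) (by rw [abs_of_nonneg hs0]; linarith)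
  rw [abs_of_nonneg hs0] at hexp
  have h5 := (le_abs_self _).trans hexp
  have h6 := (Complex.abs_re_le_norm ((w ^ 3) ^ (3 ^ m) - 1)).trans hp
  rw [← e, Complex.sub_re, Complex.one_re] at h6
  have := (abs_le.1 h6).1
  linarith

/-- Stability of the cube-root-of-unity identity: if `1 + w₁ + w₂ = 0` with
`|wⱼ| = e^{yⱼ}`, `|yⱼ| ≤ c·3^{-k'}`, then `Re(1 + w₁^{3^k} + w₂^{3^k}) ≥ 2`
(in particular the modulus is at least `2`) for all `1 ≤ k ≤ k' + 1`. -/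
theorem cube_root_stability :
    ∃ c > (0:ℝ), ∀ k' : ℕ, ∀ y₁ y₂ : ℝ,
      |y₁| ≤ c * (3:ℝ) ^ (-(k' : ℤ)) → |y₂| ≤ c * (3:ℝ) ^ (-(k' : ℤ)) →
      ∀ w₁ w₂ : ℂ, ‖w₁‖ = Real.exp y₁ → ‖w₂‖ = Real.exp y₂ →
      1 + w₁ + w₂ = 0 →
      ∀ k : ℕ, 1 ≤ k → k ≤ k' + 1 →
        2 ≤ (1 + w₁ ^ (3 ^ k) + w₂ ^ (3 ^ k)).re ∧
        2 ≤ ‖1 + w₁ ^ (3 ^ k) + w₂ ^ (3 ^ k)‖ := by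
  refine ⟨1 / 300, by norm_num, ?_⟩
  intro k' y₁ y₂ h1 h2 w₁ w₂ hw1 hw2 h k hk hk'
  have ht : 1 / 300 * (3:ℝ) ^ (-(k' : ℤ)) ≤ 1 / 300 := by
    have : (3:ℝ) ^ (-(k' : ℤ)) ≤ 1 := by
      rw [zpow_neg, zpow_natCast]
      exact inv_le_one_of_one_le₀ (one_le_pow₀ (by norm_num))
    linarith
  have a1 := high_pow_near_one k' k w₁ hk hk' (cube_near_one _ y₁ y₂ ht h1 h2 w₁ w₂ hw1 hw2 h)
  have a2 := high_pow_near_one k' k w₂ hk hk'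
    (cube_near_one _ y₂ y₁ ht h2 h1 w₂ w₁ hw2 hw1 (by linear_combination h))
  have hre : 2 ≤ (1 + w₁ ^ (3 ^ k) + w₂ ^ (3 ^ k)).re := by
    rw [Complex.add_re, Complex.add_re, Complex.one_re]
    linarith
  exact ⟨hre, hre.trans (Complex.re_le_norm _)⟩
end

section
/- There exist absolute constants c > 0 and δ_0 > 0 such that for every δ ∈ (0, δ_0], every t ∈ [0,1], all integers k*, k' with 0 ≤ k* ≤ k', and every z ∈ ℂ with |Im z| ≤ δ: if |1 + e^{-i 3^{-k'} z} + e^{-i t 3^{-k'} z}| < c·δ·3^{-k*}, then for every integer k with k' − k* ≤ k ≤ k' − 1, one has |1 + e^{-i 3^{-k} z} + e^{-i t 3^{-k} z}| ≥ 2. -/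
lemma aux_cube (a b : ℂ) (η : ℝ) (h1 : η ≤ 1/1000)
    (ha : |‖a‖ - 1| ≤ 2 * η) (hb : |‖b‖ - 1| ≤ 2 * η) (hab : ‖1 + a + b‖ ≤ η) :
    ‖a ^ 3 - 1‖ ≤ 100 * η := by
  have h0 : 0 ≤ η := (norm_nonneg _).trans hab
  rw [abs_le] at ha hb
  have hna := norm_nonneg a
  have hnb := norm_nonneg b
  have h2 : |‖1 + a‖ - ‖b‖| ≤ η := by
    have h := abs_norm_sub_norm_le (1 + a) (-b)
    rw [norm_neg, sub_neg_eq_add] at h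
    exact h.trans hab
  rw [abs_le] at h2
  have hA : |‖a‖ ^ 2 - 1| ≤ 5 * η := by
    rw [abs_le]; constructor <;> nlinarith
  have hB : |‖b‖ ^ 2 - 1| ≤ 5 * η := by
    rw [abs_le]; constructor <;> nlinarith
  have hC : |‖1 + a‖ ^ 2 - ‖b‖ ^ 2| ≤ 3 * η := by
    have := norm_nonneg (1 + a)
    rw [abs_le]; constructor <;> nlinarith
  have hsq : ‖1 + a‖ ^ 2 = 1 + 2 * a.re + ‖a‖ ^ 2 := by
    rw [Complex.sq_norm, Complex.sq_norm, Complex.normSq_apply, Complex.normSq_apply]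
    simp; ring
  have hx : |1 + 2 * a.re| ≤ 13 * η := by
    rw [abs_le] at *
    constructor <;> linarith [hA.1, hA.2, hB.1, hB.2, hC.1, hC.2]
  have hn : ((‖a‖ ^ 2 : ℝ) : ℂ) = ((a.re * a.re + a.im * a.im : ℝ) : ℂ) := by
    rw [Complex.sq_norm, Complex.normSq_apply]
  have hq : a ^ 2 + a + 1 = ((1 + 2 * a.re : ℝ) : ℂ) * a + ((1 - ‖a‖ ^ 2 : ℝ) : ℂ) := by
    rw [Complex.ofReal_sub, hn]
    apply Complex.ext <;> simp [pow_two] <;> ring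
  have hq2 : ‖a ^ 2 + a + 1‖ ≤ 31 * η + 1/10 * η := by
    rw [hq]
    refine (norm_add_le _ _).trans ?_
    rw [norm_mul, Complex.norm_real, Complex.norm_real, Real.norm_eq_abs, Real.norm_eq_abs,
      abs_sub_comm]
    have : |1 + 2 * a.re| * ‖a‖ ≤ 13 * η * 2 :=
      mul_le_mul hx (by linarith) hna (by linarith)
    linarith
  have hm : ‖a - 1‖ ≤ 3 + 1/100 := by
    refine (norm_sub_le _ _).trans ?_
    rw [norm_one]; linarith
  have : a ^ 3 - 1 = (a - 1) * (a ^ 2 + a + 1) := by ring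
  rw [this, norm_mul]
  have := mul_le_mul hm hq2 (norm_nonneg _) (by norm_num)
  linarith

lemma aux_pow (w : ℂ) (M : ℝ) (n : ℕ) (h : ∀ i < n, ‖w ^ i‖ ≤ M) :
    ‖w ^ n - 1‖ ≤ n * (M * ‖w - 1‖) := by
  induction n with
  | zero => simp
  | succ n ih =>
    have e : w ^ (n + 1) - 1 = w ^ n * (w - 1) + (w ^ n - 1) := by ring
    rw [e]
    refine (norm_add_le _ _).trans ?_
    rw [norm_mul]
    have h1 := ih (fun i hi => h i (by omega))
    have h2 := mul_le_mul_of_nonneg_right (h n (by omega)) (norm_nonneg (w - 1))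
    push_cast
    linarith

lemma aux_norm (u : ℂ) (η : ℝ) (h1 : η ≤ 1/1000) (hu : |u.re| ≤ η) :
    |‖Complex.exp u‖ - 1| ≤ 2 * η := by
  rw [Complex.norm_exp]
  exact (Real.abs_exp_sub_one_le (by linarith)).trans (by linarith)

lemma aux_near (u : ℂ) (η : ℝ) (m : ℕ) (hm : (3:ℝ) ^ (m + 1) * η ≤ 1/1000)
    (hu : |u.re| ≤ η) (h : ‖(Complex.exp u) ^ 3 - 1‖ ≤ 100 * η) :
    ‖(Complex.exp u) ^ (3 ^ (m + 1)) - 1‖ ≤ 1/2 := by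
  have h0 : 0 ≤ η := (abs_nonneg _).trans hu
  rw [pow_succ', pow_mul]
  have := aux_pow (Complex.exp u ^ 3) 3 (3 ^ m) (by
    intro i hi
    rw [← pow_mul, ← Complex.exp_nat_mul, Complex.norm_exp]
    have hr : (((3 * i : ℕ) : ℂ) * u).re = (3 * i : ℝ) * u.re := by
      simp [Complex.mul_re]
    rw [hr]
    have hi' : (i : ℝ) ≤ 3 ^ m := by exact_mod_cast hi.le
    have hle : (3 * i : ℝ) * u.re ≤ 1 := by
      calc (3 * i : ℝ) * u.re ≤ (3 * i : ℝ) * η :=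
            mul_le_mul_of_nonneg_left ((le_abs_self _).trans hu) (by positivity)
        _ ≤ 3 ^ (m + 1) * η := by
            apply mul_le_mul_of_nonneg_right _ h0
            rw [pow_succ]; linarith
        _ ≤ 1 := by linarith
    have := Real.exp_le_exp.2 hle
    linarith [Real.exp_one_lt_d9])
  refine this.trans ?_
  push_cast
  have h3 : (3:ℝ) ^ m * (3 * ‖Complex.exp u ^ 3 - 1‖) ≤ 3 ^ m * (3 * (100 * η)) := by gcongr
  rw [pow_succ] at hm
  linarith

lemma aux_re (s : ℝ) (hs : s ∈ Set.Icc (0:ℝ) 1) (k K : ℕ) (hk : K ≤ k) (z : ℂ) (δ : ℝ)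
    (hz : |z.im| ≤ δ) :
    |(-Complex.I * (s : ℂ) * (3 : ℂ) ^ (-(k : ℤ)) * z).re| ≤ δ * (3:ℝ) ^ (-(K : ℤ)) := by
  have e : -Complex.I * (s : ℂ) * (3 : ℂ) ^ (-(k : ℤ)) * z
      = ((s * (3:ℝ) ^ (-(k : ℤ)) : ℝ) : ℂ) * (-Complex.I * z) := by
    push_cast; ring
  have hp : (0:ℝ) < (3:ℝ) ^ (-(k : ℤ)) := by positivity
  have hpk : (3:ℝ) ^ (-(k : ℤ)) ≤ (3:ℝ) ^ (-(K : ℤ)) :=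
    zpow_le_zpow_right₀ (by norm_num) (by omega)
  rw [e, Complex.re_ofReal_mul, abs_mul]
  have e2 : (-Complex.I * z).re = z.im := by simp
  rw [e2, abs_of_nonneg (mul_nonneg hs.1 hp.le), mul_comm]
  have : s * (3:ℝ) ^ (-(k : ℤ)) ≤ (3:ℝ) ^ (-(K : ℤ)) := by nlinarith [hs.2]
  exact mul_le_mul hz this (mul_nonneg hs.1 hp.le) ((abs_nonneg _).trans hz)

lemma aux_exp (s : ℝ) (k j : ℕ) (z : ℂ) :
    Complex.exp (-Complex.I * (s : ℂ) * (3 : ℂ) ^ (-(k : ℤ)) * z)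
      = Complex.exp (-Complex.I * (s : ℂ) * (3 : ℂ) ^ (-((k + j : ℕ) : ℤ)) * z) ^ (3 ^ j) := by
  rw [← Complex.exp_nat_mul]
  congr 1
  have : (3 : ℂ) ^ (-(k : ℤ)) = 3 ^ j * (3 : ℂ) ^ (-((k + j : ℕ) : ℤ)) := by
    rw [zpow_neg, zpow_neg, zpow_natCast, zpow_natCast, pow_add]
    field_simp
  rw [this]; push_cast; ring

lemma aux_phi (t : ℝ) (k : ℕ) (z : ℂ) : phiTildeK t k z =
    1 + Complex.exp (-Complex.I * ((1:ℝ) : ℂ) * (3 : ℂ) ^ (-(k : ℤ)) * z)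
    + Complex.exp (-Complex.I * (t : ℂ) * (3 : ℂ) ^ (-(k : ℤ)) * z) := by
  simp [phiTildeK]

/-- If the factor of index `k'` is very small (smaller than `c·δ·3^{-k*}`) at a
point `z` near the real axis, then the `k*` preceding factors all have modulus
at least `2` at `z`. -/
theorem preceding_factors_large :
    ∃ c > (0:ℝ), ∃ δ₀ > (0:ℝ), ∀ δ : ℝ, 0 < δ → δ ≤ δ₀ →
      ∀ t ∈ Set.Icc (0:ℝ) 1, ∀ kstar k' : ℕ, kstar ≤ k' →
      ∀ z : ℂ, |z.im| ≤ δ →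
      ‖phiTildeK t k' z‖ < c * δ * (3:ℝ) ^ (-(kstar : ℤ)) →
      ∀ k : ℕ, k' - kstar ≤ k → k < k' →
        2 ≤ ‖phiTildeK t k z‖ := by
  refine ⟨1, one_pos, 1/1000, by norm_num, ?_⟩
  intro δ hδ hδ0 t ht kstar k' hkk z hz hsmall k hk1 hk2
  obtain ⟨m, rfl⟩ : ∃ m, k' = k + (m + 1) := ⟨k' - k - 1, by omega⟩
  rw [one_mul] at hsmall
  have hu := aux_re 1 (by simp) (k + (m + 1)) kstar hkk z δ hz
  have hv := aux_re t ht (k + (m + 1)) kstar hkk z δ hz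
  rw [aux_phi] at hsmall
  rw [aux_phi, aux_exp 1 k (m + 1), aux_exp t k (m + 1)]
  set η := δ * (3:ℝ) ^ (-(kstar : ℤ)) with hη
  set u := -Complex.I * ((1:ℝ) : ℂ) * (3 : ℂ) ^ (-((k + (m + 1) : ℕ) : ℤ)) * z
  set v := -Complex.I * (t : ℂ) * (3 : ℂ) ^ (-((k + (m + 1) : ℕ) : ℤ)) * z
  have h0 : 0 ≤ η := (abs_nonneg _).trans hu
  have hm : (3:ℝ) ^ (m + 1) * η ≤ 1/1000 := by
    have h3 : (3:ℝ) ^ (m + 1) ≤ 3 ^ kstar := pow_le_pow_right₀ (by norm_num) (by omega)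
    have h4 : (3:ℝ) ^ kstar * η = δ := by
      rw [hη, zpow_neg, zpow_natCast]; field_simp
    have := mul_le_mul_of_nonneg_right h3 h0
    linarith
  have h1 : η ≤ 1/1000 := by
    have : (1:ℝ) ≤ 3 ^ (m + 1) := one_le_pow₀ (by norm_num)
    nlinarith
  have hnu := aux_norm u η h1 hu
  have hnv := aux_norm v η h1 hv
  have hA := aux_near u η m hm hu (aux_cube _ _ η h1 hnu hnv hsmall.le)
  have hB := aux_near v η m hm hv (aux_cube _ _ η h1 hnv hnu (by
    rw [add_right_comm]; exact hsmall.le))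
  set A := Complex.exp u ^ 3 ^ (m + 1)
  set B := Complex.exp v ^ 3 ^ (m + 1)
  have e : (3:ℂ) = (1 + A + B) - (A - 1) - (B - 1) := by ring
  have h3 : ‖(3:ℂ)‖ ≤ ‖1 + A + B‖ + ‖A - 1‖ + ‖B - 1‖ := by
    conv_lhs => rw [e]
    exact (norm_sub_le _ _).trans (by gcongr; exact norm_sub_le _ _)
  have h4 : ‖(3:ℂ)‖ = 3 := by simp
  linarith
end

section
/- There is an absolute constant C > 0 with the following property. Let A ⊂ ℝ be a finite set, for each α ∈ A let c_α ∈ ℂ with |c_α| = 1, and let S > 0 satisfy ∫_ℝ ( ∑_{α ∈ A} χ_{[α−1, α+1]}(x) )^2 dx ≤ S. Then ∫_0^1 | ∑_{α ∈ A} c_α e^{i α y} |^2 dy ≤ C·S. -/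
open MeasureTheory

open scoped FourierTransform SchwartzMap ContDiff in
theorem plancherel_aux (f : ℝ → ℂ) (hf1 : Integrable f) (hf2 : MemLp f 2 volume) :
    (𝓕 f : ℝ → ℂ) =ᵐ[volume] ((𝓕 (hf2.toLp f) : Lp ℂ 2 (volume : Measure ℝ)) : ℝ → ℂ) := by
  have hcont : Continuous (𝓕 f : ℝ → ℂ) :=
    VectorFourier.fourierIntegral_continuous (μ := volume) Real.continuous_fourierChar
      (L := innerₗ ℝ) continuous_inner hf1
  have hu : LocallyIntegrable ((𝓕 (hf2.toLp f) : Lp ℂ 2 (volume : Measure ℝ)) : ℝ → ℂ) volume :=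
    (Lp.memLp (μ := volume) _).locallyIntegrable (by norm_num)
  refine ae_eq_of_integral_contDiff_smul_eq hcont.locallyIntegrable hu ?_
  intro g hg hgs
  have hgs' : HasCompactSupport (fun x => (g x : ℂ)) := hgs.comp_left (g := Complex.ofReal) (by simp)
  have hg' : ContDiff ℝ ∞ (fun x => (g x : ℂ)) := Complex.ofRealCLM.contDiff.comp hg
  let G : 𝓢(ℝ, ℂ) := hgs'.toSchwartzMap hg'
  have hG : ∀ x, G x = (g x : ℂ) := fun x => rfl
  have key := congrArg (fun T => T G) (Lp.fourier_toTemperedDistribution_eq (hf2.toLp f))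
  simp only [TemperedDistribution.fourier_apply, Lp.toTemperedDistribution_apply] at key
  have h1 : ∫ x, (𝓕 G) x • (hf2.toLp f : ℝ → ℂ) x = ∫ x, (𝓕 G) x • f x := by
    apply integral_congr_ae
    filter_upwards [hf2.coeFn_toLp] with x hx
    rw [hx]
  have h2 : ∫ x, (𝓕 G) x • f x = ∫ x, G x • (𝓕 f) x := by
    have := VectorFourier.integral_fourierIntegral_smul_eq_flip (L := innerₗ ℝ)
      (μ := volume) (ν := volume) Real.continuous_fourierChar continuous_inner G.integrable hf1
    simp only [flip_innerₗ] at this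
    rw [SchwartzMap.fourier_coe]
    exact this
  calc ∫ x, g x • (𝓕 f) x = ∫ x, G x • (𝓕 f) x := by simp [hG]
    _ = _ := by rw [← h2, ← h1, key]
    _ = _ := by simp [hG]

open scoped FourierTransform in
theorem plancherel_L1L2 (f : ℝ → ℂ) (hf1 : Integrable f) (hf2 : MemLp f 2 volume) :
    Integrable (fun x => ‖(𝓕 f) x‖ ^ 2) ∧ ∫ x, ‖(𝓕 f) x‖ ^ 2 = ∫ x, ‖f x‖ ^ 2 := by
  have hae := plancherel_aux f hf1 hf2
  have hm : MemLp (𝓕 f : ℝ → ℂ) 2 := (memLp_congr_ae hae).2 (Lp.memLp _)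
  refine ⟨hm.integrable_norm_pow (by norm_num), ?_⟩
  have hn : eLpNorm (𝓕 f : ℝ → ℂ) 2 volume = eLpNorm f 2 volume := by
    rw [eLpNorm_congr_ae hae, ← eLpNorm_congr_ae hf2.coeFn_toLp]
    have := Lp.norm_fourier_eq (hf2.toLp f)
    rw [Lp.norm_def, Lp.norm_def, ENNReal.toReal_eq_toReal_iff' (Lp.eLpNorm_ne_top _) (Lp.eLpNorm_ne_top _)] at this
    exact this
  have e1 := hm.eLpNorm_eq_integral_rpow_norm (by norm_num) (by norm_num)
  have e2 := hf2.eLpNorm_eq_integral_rpow_norm (by norm_num) (by norm_num)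
  rw [e1, e2, ENNReal.ofReal_eq_ofReal_iff (by positivity) (by positivity)] at hn
  rw [Real.rpow_left_inj (by positivity) (by positivity) (by norm_num)] at hn
  simpa using hn

theorem kernel_lower (y : ℝ) (hy0 : 0 ≤ y) (hy1 : y ≤ 1) :
    1 ≤ ‖∫ s in (-1:ℝ)..1, Complex.exp (Complex.I * s * y)‖ := by
  have hint : IntervalIntegrable (fun s : ℝ => Complex.exp (Complex.I * s * y)) volume (-1) 1 :=
    Continuous.intervalIntegrable (by fun_prop) _ _
  refine le_trans ?_ (Complex.re_le_norm _)
  have h1 : (∫ s in (-1:ℝ)..1, Complex.exp (Complex.I * s * y)).re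
      = ∫ s in (-1:ℝ)..1, Real.cos (s * y) := by
    have := Complex.reCLM.intervalIntegral_comp_comm hint
    rw [← Complex.reCLM_apply, ← this]
    congr 1; ext s
    simp [Complex.exp_re]
  rw [h1]
  have h2 : ∫ s in (-1:ℝ)..1, (1/2 : ℝ) = 1 := by simp; norm_num
  refine h2.symm.le.trans ?_
  apply intervalIntegral.integral_mono_on (by norm_num) (by simp)
    (Continuous.intervalIntegrable (by fun_prop) _ _)
  intro s hs
  have h3 := Real.one_sub_sq_div_two_le_cos (x := s * y)
  have h4 : s ^ 2 ≤ 1 := by nlinarith [hs.1, hs.2]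
  have h5 : y ^ 2 ≤ 1 := by nlinarith
  have h6 : (s * y) ^ 2 ≤ 1 := by rw [mul_pow]; nlinarith [sq_nonneg s, sq_nonneg y]
  linarith

theorem shift_kernel (α y : ℝ) :
    ∫ t in (α - 1)..(α + 1), Complex.exp (Complex.I * t * y) =
      Complex.exp (Complex.I * α * y) * ∫ s in (-1:ℝ)..1, Complex.exp (Complex.I * s * y) := by
  have := intervalIntegral.integral_comp_add_right (a := -1) (b := 1)
    (fun t : ℝ => Complex.exp (Complex.I * t * y)) α
  rw [show α - 1 = -1 + α by ring, show α + 1 = 1 + α by ring, ← this,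
    ← intervalIntegral.integral_const_mul]
  congr 1; ext s
  rw [← Complex.exp_add]; congr 1; push_cast; ring

/-- the step function. -/
noncomputable def stepF (A : Finset ℝ) (c : ℝ → ℂ) : ℝ → ℂ := fun x =>
  ∑ α ∈ A, Set.indicator (Set.Icc (α - 1) (α + 1)) (fun _ => c α) x

theorem stepF_memLp (A : Finset ℝ) (c : ℝ → ℂ) (p : ENNReal) : MemLp (stepF A c) p := by
  apply memLp_finsetSum
  intro α _
  exact memLp_indicator_const p measurableSet_Icc _ (Or.inr (by simp))

open scoped FourierTransform in
theorem stepF_fourier (A : Finset ℝ) (c : ℝ → ℂ) (y : ℝ) :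
    (𝓕 (stepF A c)) (y / (-(2 * Real.pi))) =
      (∑ α ∈ A, c α * Complex.exp (Complex.I * α * y)) *
        ∫ s in (-1:ℝ)..1, Complex.exp (Complex.I * s * y) := by
  rw [Real.fourier_real_eq_integral_exp_smul]
  have hpi := Real.pi_ne_zero
  have h1 : ∀ v : ℝ, Complex.exp (↑(-2 * Real.pi * v * (y / (-(2 * Real.pi)))) * Complex.I) •
      stepF A c v = ∑ α ∈ A, Set.indicator (Set.Icc (α - 1) (α + 1))
        (fun t : ℝ => c α * Complex.exp (Complex.I * t * y)) v := by
    intro v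
    have : -2 * Real.pi * v * (y / (-(2 * Real.pi))) = v * y := by field_simp
    rw [this, stepF, Finset.smul_sum]
    refine Finset.sum_congr rfl fun α _ => ?_
    by_cases hv : v ∈ Set.Icc (α - 1) (α + 1)
    · simp only [Set.indicator_of_mem hv, smul_eq_mul]
      rw [mul_comm]; congr 2; push_cast; ring
    · simp only [Set.indicator_of_notMem hv, smul_zero]
  simp_rw [h1]
  rw [integral_finsetSum, Finset.sum_mul]
  · refine Finset.sum_congr rfl fun α _ => ?_
    rw [integral_indicator measurableSet_Icc, integral_Icc_eq_integral_Ioc,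
      ← intervalIntegral.integral_of_le (by linarith), intervalIntegral.integral_const_mul,
      shift_kernel]
    ring
  · intro α _
    rw [integrable_indicator_iff measurableSet_Icc]
    exact Continuous.integrableOn_Icc (by fun_prop)

/-- Carleson-embedding-type estimate: the `L²` norm on `[0,1]` of a unimodular
exponential sum is controlled by the `L²` norm of the sum of the indicators of
the unit intervals centered at the frequencies. -/
theorem exponential_sum_L2_bound :
    ∃ C > (0:ℝ), ∀ A : Finset ℝ, ∀ c : ℝ → ℂ, (∀ α ∈ A, ‖c α‖ = 1) →
      ∀ S : ℝ, 0 < S →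
      (∫ x : ℝ, (∑ α ∈ A, Set.indicator (Set.Icc (α - 1) (α + 1)) (fun _ => (1:ℝ)) x) ^ 2)
        ≤ S →
      (∫ y in (0:ℝ)..1,
          ‖∑ α ∈ A, c α * Complex.exp (Complex.I * (α : ℂ) * (y : ℂ))‖ ^ 2)
        ≤ C * S := by
  refine ⟨2 * Real.pi, by positivity, ?_⟩
  intro A c hc S _ hS
  have hF1 : Integrable (stepF A c) := memLp_one_iff_integrable.1 (stepF_memLp A c 1)
  have hF2 := stepF_memLp A c 2
  obtain ⟨hi, he⟩ := plancherel_L1L2 _ hF1 hF2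
  have hpi : -(2 * Real.pi) ≠ 0 := by simp [Real.pi_ne_zero]
  have hi' := hi.comp_div hpi
  have hchange := Measure.integral_comp_div (fun x => ‖(FourierTransform.fourier (stepF A c)) x‖ ^ 2)
    (-(2 * Real.pi))
  have habs : |(-(2 * Real.pi))| = 2 * Real.pi := by
    rw [abs_neg, abs_of_pos (by positivity)]
  rw [habs, he, smul_eq_mul] at hchange
  calc _ ≤ ∫ y in (0:ℝ)..1,
        ‖(FourierTransform.fourier (stepF A c)) (y / (-(2 * Real.pi)))‖ ^ 2 := by
        apply intervalIntegral.integral_mono_on (by norm_num)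
        · exact Continuous.intervalIntegrable (by fun_prop) _ _
        · exact hi'.intervalIntegrable
        · intro y hy
          rw [stepF_fourier, norm_mul]
          gcongr
          exact le_mul_of_one_le_right (norm_nonneg _) (kernel_lower y hy.1 hy.2)
    _ ≤ ∫ y, ‖(FourierTransform.fourier (stepF A c)) (y / (-(2 * Real.pi)))‖ ^ 2 := by
        rw [intervalIntegral.integral_of_le (by norm_num)]
        exact setIntegral_le_integral hi' (Filter.Eventually.of_forall fun y => by positivity)
    _ = 2 * Real.pi * ∫ x, ‖stepF A c x‖ ^ 2 := hchange
    _ ≤ 2 * Real.pi * S := by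
        gcongr
        refine le_trans ?_ hS
        have hone : MemLp (fun x => ∑ α ∈ A,
            Set.indicator (Set.Icc (α - 1) (α + 1)) (fun _ => (1:ℝ)) x) 2 := by
          apply memLp_finsetSum
          intro α _
          exact memLp_indicator_const 2 measurableSet_Icc _ (Or.inr (by simp))
        apply integral_mono (hF2.integrable_norm_pow (by norm_num)) hone.integrable_sq
        intro x
        simp only [stepF]
        gcongr
        refine (norm_sum_le _ _).trans (Finset.sum_le_sum fun α hα => ?_)
        rw [norm_indicator_eq_indicator_norm, hc α hα]
end
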